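/- arXiv:1508.02014 — 3 statements merged into one kernel-verified Lean document; each statement's English description precedes it below -/
import Mathlib

section
/- Let n ≥ 2, let q : ℝ^n_+ → ℝ satisfy the cost-function conditions, let c ∈ ℝ^n_+, set α = c_1 + ⋯ + c_n, and let h ∈ L^1_α(ℝ^1_+) ∩ L^2_α(ℝ^1_+). Then the operator R^h_q is injective on L^2_{I−c}(ℝ^n_+) (i.e., if f ∈ L^2_{I−c}(ℝ^n_+) and (R^h_q f)(p) = 0 for all p ∈ ℝ^n_+, then f = 0 a.e.) if and only if the set { ξ ∈ ℝ^n : (M e^{−q})(c + iξ) = 0 } has Lebesgue measure zero in ℝ^n and the set { τ ∈ ℝ : (Mh)(α + iτ) = 0 } has Lebesgue measure zero in ℝ. -/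
open MeasureTheory Complex Set

noncomputable section

/-- The positive orthant `ℝ^n_+`. -/
def posOrth (n : ℕ) : Set (Fin n → ℝ) := {x | ∀ i, 0 < x i}

/-- `q` satisfies the cost-function conditions: `C¹` on `ℝ^n_+`, positive,
positively homogeneous of degree one, with bounded level sets. -/
def IsCostFun (n : ℕ) (q : (Fin n → ℝ) → ℝ) : Prop :=
  ContDiffOn ℝ 1 q (posOrth n) ∧
  (∀ x ∈ posOrth n, 0 < q x) ∧
  (∀ lam : ℝ, 0 < lam → ∀ x ∈ posOrth n, q (fun i => lam * x i) = lam * q x) ∧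
  (∀ t : ℝ, Bornology.IsBounded {x | x ∈ posOrth n ∧ q x = t})

/-- The `n`-dimensional Mellin transform `(Mg)(z) = ∫_{ℝ^n_+} x^{z-I} g(x) dx`. -/
def mellinT (n : ℕ) (g : (Fin n → ℝ) → ℝ) (z : Fin n → ℂ) : ℂ :=
  ∫ x in posOrth n, (∏ i, (x i : ℂ) ^ (z i - 1)) * g x

/-- Membership in `L²_c(ℝ^n_+)`: measurable with `∫ |f|² x^{2c-I} < ∞`. -/
def MemL2w (n : ℕ) (c : Fin n → ℝ) (f : (Fin n → ℝ) → ℝ) : Prop :=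
  AEStronglyMeasurable f (volume.restrict (posOrth n)) ∧
  IntegrableOn (fun x => |f x| ^ 2 * ∏ i, x i ^ (2 * c i - 1)) (posOrth n)

/-- Membership in `L¹_α(ℝ¹_+)`: measurable with `∫_0^∞ |h(t)| t^{α-1} dt < ∞`. -/
def MemL1w1 (α : ℝ) (h : ℝ → ℝ) : Prop :=
  IntegrableOn (fun t => h t * t ^ (α - 1)) (Ioi (0 : ℝ))

/-- Membership in `L²_α(ℝ¹_+)`: measurable with `∫_0^∞ |h(t)|² t^{2α-1} dt < ∞`. -/
def MemL2w1 (α : ℝ) (h : ℝ → ℝ) : Prop :=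
  AEStronglyMeasurable h (volume.restrict (Ioi (0 : ℝ))) ∧
  IntegrableOn (fun t => |h t| ^ 2 * t ^ (2 * α - 1)) (Ioi (0 : ℝ))

/-- The operator `(R^h_q f)(p) = ∫_{ℝ^n_+} h(q(p₁x₁,…,pₙxₙ)) f(x) dx`. -/
def Rhq (n : ℕ) (q : (Fin n → ℝ) → ℝ) (h : ℝ → ℝ) (f : (Fin n → ℝ) → ℝ)
    (p : Fin n → ℝ) : ℝ :=
  ∫ x in posOrth n, h (q (fun i => p i * x i)) * f x

section F
open FourierTransform SchwartzMap
variable {V : Type*} [NormedAddCommGroup V] [InnerProductSpace ℝ V] [FiniteDimensional ℝ V]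
  [MeasurableSpace V] [BorelSpace V]

theorem aux_flip (u : V → ℂ) (hu : Integrable u) (φ : V → ℂ) (hφ : Integrable φ) :
    ∫ x, φ x * 𝓕 u x = ∫ x, 𝓕 φ x * u x := by
  have := VectorFourier.integral_fourierIntegral_smul_eq_flip (f := φ) (g := u)
    (μ := (volume : Measure V)) (ν := volume) (L := innerₗ V) (e := Real.fourierChar)
    Real.continuous_fourierChar (by simpa using continuous_inner) hφ hu
  simp only [flip_innerₗ, smul_eq_mul] at this
  exact this.symm

theorem aux_cont (u : V → ℂ) (hu : Integrable u) : Continuous (𝓕 u) :=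
  VectorFourier.fourierIntegral_continuous Real.continuous_fourierChar
    (by simpa using continuous_inner) hu

theorem aux_L2 (u : V → ℂ) (hu : Integrable u) (hu2 : MemLp u 2) :
    ((𝓕 (hu2.toLp u) : Lp (α := V) ℂ 2 (volume : Measure V)) : V → ℂ) =ᵐ[volume] 𝓕 u := by
  apply ae_eq_of_integral_contDiff_smul_eq
  · exact (Lp.memLp _).locallyIntegrable (by norm_num)
  · exact (aux_cont u hu).locallyIntegrable
  · intro g hg1 hg2
    have hg2' : HasCompactSupport (fun x => (g x : ℂ)) := hg2.comp_left (g := fun x : ℝ => (x:ℂ)) (by simp)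
    have hg1' : ContDiff ℝ (⊤ : ℕ∞) (fun x => (g x : ℂ)) := Complex.ofRealCLM.contDiff.comp hg1
    set φ : 𝓢(V, ℂ) := hg2'.toSchwartzMap hg1' with hφ
    have h1 : ∀ x, φ x = (g x : ℂ) := fun x => rfl
    have e1 := congrArg (fun T => T φ) (Lp.fourier_toTemperedDistribution_eq (hu2.toLp u))
    simp only [TemperedDistribution.fourier_apply, Lp.toTemperedDistribution_apply] at e1
    have e2 := aux_flip u hu φ (SchwartzMap.integrable (μ := volume) φ)
    calc _ = ∫ x, φ x • (𝓕 (hu2.toLp u) : Lp (α := V) ℂ 2 (volume : Measure V)) x := by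
            apply integral_congr_ae
            filter_upwards with x
            rw [h1]; simp
      _ = ∫ x, (𝓕 φ) x • (hu2.toLp u) x := e1.symm
      _ = ∫ x, (𝓕 φ) x * u x := by
            apply integral_congr_ae
            filter_upwards [hu2.coeFn_toLp] with x hx
            rw [hx]; simp
      _ = ∫ x, φ x * 𝓕 u x := by
            rw [e2]; rfl
      _ = _ := by
            apply integral_congr_ae
            filter_upwards with x
            rw [h1]; simp

theorem aux_inj (w : V → ℂ) (hw : Integrable w)
    (h0 : ∀ s : V, 𝓕 w s = 0) : ∀ᵐ x, w x = 0 := by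
  apply ae_eq_zero_of_integral_contDiff_smul_eq_zero hw.locallyIntegrable
  intro g hg1 hg2
  have hg2' : HasCompactSupport (fun x => (g x : ℂ)) := hg2.comp_left (g := fun x : ℝ => (x:ℂ)) (by simp)
  have hg1' : ContDiff ℝ (⊤ : ℕ∞) (fun x => (g x : ℂ)) := Complex.ofRealCLM.contDiff.comp hg1
  set φ : 𝓢(V, ℂ) := hg2'.toSchwartzMap hg1' with hφ
  have h1 : ∀ x, φ x = (g x : ℂ) := fun x => rfl
  have e2 := aux_flip w hw (𝓕⁻ φ : 𝓢(V, ℂ)) (SchwartzMap.integrable _)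
  rw [← SchwartzMap.fourier_coe, FourierTransform.fourier_fourierInv_eq] at e2
  simp only [h0, mul_zero, integral_zero, h1] at e2
  simpa using e2.symm

/-- convolution formula -/
theorem aux_conv (u v : V → ℂ) (hu : Integrable u) (hu2 : MemLp u 2) (hv : MemLp v 2) (s : V) :
    ∫ y, u (s - y) * v y =
      𝓕 (fun ξ => 𝓕 u ξ * (𝓕 (hv.toLp v) : Lp (α := V) ℂ 2 (volume : Measure V)) ξ) (-s) := by
  set w : V → ℂ := fun y => (starRingEnd ℂ) (u (s - y)) with hw
  have hw1 : Integrable w := memLp_one_iff_integrable.1 (memLp_one_iff_integrable.2 (hu.comp_sub_left s)).star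
  have hw2 : MemLp w 2 := 
    (hu2.comp_measurePreserving (Measure.measurePreserving_sub_left volume s)).star
  have hF : ∀ ξ, (starRingEnd ℂ) (𝓕 w ξ) = Real.fourierChar (inner ℝ s ξ) * 𝓕 u ξ := by
    intro ξ
    rw [Real.fourier_eq, Real.fourier_eq, ← integral_conj, ← integral_const_mul,
      ← integral_sub_left_eq_self _ _ s]
    congr 1; ext y
    simp only [hw, Circle.smul_def, smul_eq_mul, map_mul, Complex.conj_conj, sub_sub_cancel, inner_sub_left,
      ← mul_assoc]
    congr 1
    rw [← Circle.coe_inv_eq_conj, ← Circle.coe_mul, ← AddChar.map_neg_eq_inv, ← AddChar.map_add_eq_mul]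
    congr 2; ring
  have key := Lp.inner_fourier_eq (hw2.toLp w) (hv.toLp v)
  rw [L2.inner_def, L2.inner_def] at key
  calc _ = ∫ y, inner ℂ (hw2.toLp w y) (hv.toLp v y) := by
        apply integral_congr_ae
        filter_upwards [hw2.coeFn_toLp, hv.coeFn_toLp] with y h1 h2
        rw [h1, h2]; simp [hw, mul_comm]
    _ = _ := key.symm
    _ = _ := by
      rw [Real.fourier_eq]
      apply integral_congr_ae
      filter_upwards [aux_L2 w hw1 hw2] with ξ h1
      rw [h1, RCLike.inner_apply, hF]
      simp only [Circle.smul_def, smul_eq_mul, inner_neg_right, neg_neg, real_inner_comm]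
      ring

theorem aux_integrable (u v : V → ℂ) (hu : Integrable u) (hu2 : MemLp u 2) (hv : MemLp v 2) :
    Integrable (fun ξ => 𝓕 u ξ * (𝓕 (hv.toLp v) : Lp (α := V) ℂ 2 (volume : Measure V)) ξ) := by
  have h1 : MemLp (𝓕 u) 2 := (memLp_congr_ae (aux_L2 u hu hu2)).1 (Lp.memLp _)
  exact h1.integrable_mul (Lp.memLp _)

theorem aux_C (u : V → ℝ) (hu : Integrable u) (hu2 : MemLp u 2) :
    (∀ v : V → ℝ, MemLp v 2 → (∀ s, ∫ y, u (s - y) * v y = 0) → v =ᵐ[volume] 0) ↔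
     volume {ξ : V | 𝓕 (fun y => (u y : ℂ)) ξ = 0} = 0 := by
  set U : V → ℂ := fun y => (u y : ℂ) with hU
  have hU1 : Integrable U := hu.ofReal
  have hU2 : MemLp U 2 := hu2.ofReal
  constructor
  · intro H
    by_contra hne
    obtain ⟨E, hE1, hE2, hE3, hE4⟩ : ∃ E ⊆ {ξ : V | 𝓕 U ξ = 0}, MeasurableSet E ∧ volume E ≠ 0 ∧
        volume E ≠ ⊤ := by
      have hm : MeasurableSet {ξ : V | 𝓕 U ξ = 0} :=
        (isClosed_eq (aux_cont U hU1) continuous_const).measurableSet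
      obtain ⟨E, h1, h2, h3⟩ := Measure.exists_subset_measure_lt_top hm (pos_iff_ne_zero.2 hne)
      exact ⟨E, h2, h1, (ne_of_gt h3.1), h3.2.ne⟩
    set g : Lp (α := V) ℂ 2 (volume : Measure V) := indicatorConstLp 2 hE2 hE4 (1 : ℂ) with hg
    set v : Lp (α := V) ℂ 2 (volume : Measure V) := 𝓕⁻ g with hv
    have hFv : 𝓕 v = g := FourierTransform.fourier_fourierInv_eq g
    have hvm : MemLp (v : V → ℂ) 2 := Lp.memLp v
    have hto : hvm.toLp v = v := Lp.toLp_coeFn v hvm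
    have hc : ∀ s, ∫ y, U (s - y) * v y = 0 := by
      intro s
      rw [aux_conv U v hU1 hU2 hvm s, hto, hFv, Real.fourier_eq]
      apply integral_eq_zero_of_ae
      filter_upwards [indicatorConstLp_coeFn (p := 2) (hs := hE2) (hμs := hE4) (c := (1:ℂ))] with ξ h1
      rw [hg, h1]
      by_cases hξ : ξ ∈ E
      · have : 𝓕 U ξ = 0 := hE1 hξ
        simp [this]
      · simp [hξ]
    have hci : ∀ s, Integrable (fun y => U (s - y) * v y) := fun s =>
      (hU2.comp_measurePreserving (Measure.measurePreserving_sub_left volume s)).integrable_mul hvm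
    have hre := H (fun y => (v y).re) hvm.re (by
      intro s
      have := congrArg Complex.re (hc s)
      rw [← RCLike.re_eq_complex_re, ← integral_re (hci s)] at this
      simpa [hU] using this)
    have him := H (fun y => (v y).im) hvm.im (by
      intro s
      have := congrArg Complex.im (hc s)
      rw [← RCLike.im_eq_complex_im, ← integral_im (hci s)] at this
      simpa [hU] using this)
    have hv0 : v = 0 := by
      rw [Lp.eq_zero_iff_ae_eq_zero]
      filter_upwards [hre, him] with y h1 h2
      exact Complex.ext h1 h2
    have hg0 : g = 0 := by
      rw [← hFv, hv0]; exact map_zero (Lp.fourierTransformₗᵢ V ℂ)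
    have : ‖g‖ = 0 := by rw [hg0]; simp
    rw [hg, norm_indicatorConstLp (by norm_num) (by norm_num)] at this
    simp [Measure.real, ENNReal.toReal_eq_zero_iff, hE3, hE4] at this
  · intro hnull v hv hs
    have hv' : MemLp (fun y => (v y : ℂ)) 2 := hv.ofReal
    have hw := aux_inj _ (aux_integrable U _ hU1 hU2 hv') (by
      intro s
      have h1 := aux_conv U _ hU1 hU2 hv' (-s)
      rw [neg_neg] at h1
      rw [← h1]
      have := congrArg (fun x : ℝ => (x : ℂ)) (hs (-s))
      rw [← integral_complex_ofReal] at this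
      simpa [hU] using this)
    have h0 : (𝓕 (hv'.toLp _) : Lp (α := V) ℂ 2 (volume : Measure V)) = 0 := by
      rw [Lp.eq_zero_iff_ae_eq_zero]
      have hnull' : ∀ᵐ ξ : V, 𝓕 U ξ ≠ 0 := by
        rw [ae_iff]; simpa using hnull
      filter_upwards [hw, hnull'] with ξ h1 h2
      simpa [h2] using h1
    have h1 : hv'.toLp _ = 0 := by
      have := Lp.norm_fourier_eq (hv'.toLp _)
      rw [h0, norm_zero] at this
      exact norm_eq_zero.1 this.symm
    rw [Lp.eq_zero_iff_ae_eq_zero] at h1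
    filter_upwards [h1, hv'.coeFn_toLp] with y h1 h2
    rw [h1] at h2
    simpa using h2.symm

end F

section G
open FourierTransform
variable {n : ℕ}

theorem aux_C2 (u : (Fin n → ℝ) → ℝ) (hu : Integrable u) (hu2 : MemLp u 2) :
    (∀ v : (Fin n → ℝ) → ℝ, MemLp v 2 → (∀ s, ∫ y, u (s + y) * v y = 0) → v =ᵐ[volume] 0) ↔
     volume {ξ : Fin n → ℝ | ∫ y, (u y : ℂ) * cexp (I * ∑ i, (ξ i : ℂ) * y i) = 0} = 0 := by
  set e : EuclideanSpace ℝ (Fin n) ≃ᵐ (Fin n → ℝ) := (MeasurableEquiv.toLp 2 (Fin n → ℝ)).symm with he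
  have hep : MeasurePreserving e := EuclideanSpace.volume_preserving_symm_measurableEquiv_toLp (Fin n)
  have hadd : ∀ x y, e (x + y) = e x + e y := fun x y => rfl
  have hneg : ∀ x, e (-x) = - e x := fun x => rfl
  have key := aux_C (fun x => u (e x)) ((hep.integrable_comp_emb e.measurableEmbedding).2 hu)
    (hu2.comp_measurePreserving hep)
  have hnegp : MeasurePreserving (fun y : Fin n → ℝ => -y) := Measure.measurePreserving_neg volume
  have hnegV : MeasurePreserving (fun y : EuclideanSpace ℝ (Fin n) => -y) := Measure.measurePreserving_neg volume
  have L : (∀ v : (Fin n → ℝ) → ℝ, MemLp v 2 → (∀ s, ∫ y, u (s + y) * v y = 0) → v =ᵐ[volume] 0) ↔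
     (∀ v : EuclideanSpace ℝ (Fin n) → ℝ, MemLp v 2 → (∀ s, ∫ y, u (e (s - y)) * v y = 0) → v =ᵐ[volume] 0) := by
    constructor
    · intro H v hv hs
      have h1 := H (fun y => v (e.symm (-y))) 
        (hv.comp_measurePreserving (hep.symm.comp hnegp)) (by
          intro s
          rw [← hs (e.symm s), ← hep.symm.integral_comp e.symm.measurableEmbedding,
            ← integral_neg_eq_self]
          congr 1; ext y
          simp [sub_eq_add_neg, hadd, hneg])
      have h2 := (hep.comp hnegV).quasiMeasurePreserving.ae h1
      filter_upwards [h2] with y hy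
      simpa [hneg] using hy
    · intro H v hv hs
      have h1 := H (fun y => v (-(e y))) 
        (hv.comp_measurePreserving (hnegp.comp hep)) (by
          intro s
          rw [← hs (e s), ← integral_neg_eq_self,
            ← hep.integral_comp e.measurableEmbedding]
          congr 1; ext y
          simp [hadd, hneg])
      have h2 := (hep.symm.comp hnegp).quasiMeasurePreserving.ae h1
      filter_upwards [h2] with y hy
      simpa [hneg] using hy
  rw [L, key]
  have hset : {ξ : Fin n → ℝ | ∫ y, (u y : ℂ) * cexp (I * ∑ i, (ξ i : ℂ) * y i) = 0} =
      (fun ξ => (-(2 * Real.pi)⁻¹ : ℝ) • ξ) ⁻¹' (e.symm ⁻¹' {ξ | 𝓕 (fun y => (u (e y) : ℂ)) ξ = 0}) := by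
    ext ξ
    simp only [mem_ofPred_eq, mem_preimage]
    rw [Real.fourier_eq, ← hep.symm.integral_comp e.symm.measurableEmbedding]
    apply Eq.congr_left
    congr 1; ext y
    rw [Circle.smul_def, Real.fourierChar_apply, smul_eq_mul, mul_comm]
    simp only [MeasurableEquiv.apply_symm_apply]
    congr 2
    have : inner ℝ (e.symm y) (e.symm ((-(2 * Real.pi)⁻¹ : ℝ) • ξ)) = 
       (-(2 * Real.pi)⁻¹ : ℝ) * ∑ i, ξ i * y i := by
      simp only [he, PiLp.inner_apply, Finset.mul_sum]
      apply Finset.sum_congr rfl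
      intro i _
      simp
      ring
    rw [this]
    push_cast
    have : (Real.pi : ℂ) ≠ 0 := by exact_mod_cast Real.pi_ne_zero
    field_simp
  rw [hset, Measure.addHaar_preimage_smul _ (by simp [Real.pi_ne_zero]),
    hep.symm.measure_preimage_equiv]
  simp
  intro h
  exact absurd h (not_le.2 (by positivity))

end G

section S
variable {n : ℕ}

def swapE (Q : (Fin n → ℝ) → ℝ) (hQ : Measurable Q)
    (hs : ∀ y (t : ℝ), Q (fun i => y i + t) = Q y + t) :
    ((Fin n → ℝ) × ℝ) ≃ᵐ ((Fin n → ℝ) × ℝ) where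
  toFun p := (fun i => p.1 i + (p.2 - Q p.1), Q p.1)
  invFun p := (fun i => p.1 i + (p.2 - Q p.1), Q p.1)
  left_inv p := by
    ext
    · simp [hs]
      ring
    · simp [hs]
  right_inv p := by
    ext
    · simp [hs]
      ring
    · simp [hs]
  measurable_toFun := by
    simp only [Equiv.coe_fn_mk]
    fun_prop
  measurable_invFun := by
    simp only [Equiv.coe_fn_symm_mk]
    fun_prop

theorem swapE_mp (Q : (Fin n → ℝ) → ℝ) (hQ : Measurable Q)
    (hs : ∀ y (t : ℝ), Q (fun i => y i + t) = Q y + t) :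
    MeasurePreserving (swapE Q hQ hs) := by
  have h1 : MeasurePreserving (fun p : (Fin n → ℝ) × ℝ => (p.1, p.2 - Q p.1)) :=
    (MeasurePreserving.id volume).skew_product (g := fun y t => t - Q y) (by fun_prop)
      (Filter.Eventually.of_forall fun y => map_sub_right_eq_self volume (Q y))
  have h2 : MeasurePreserving (fun p : (Fin n → ℝ) × ℝ => ((fun i => p.1 i + p.2 : Fin n → ℝ), p.2)) := by
    have h := (MeasurePreserving.id (volume : Measure ℝ)).skew_product 
      (g := fun (t : ℝ) (y : Fin n → ℝ) => fun i => y i + t)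
      (μc := (volume : Measure (Fin n → ℝ))) (μd := (volume : Measure (Fin n → ℝ))) (by fun_prop)
      (Filter.Eventually.of_forall fun t => map_add_right_eq_self volume (fun _ : Fin n => t))
    exact (Measure.measurePreserving_swap.comp h).comp Measure.measurePreserving_swap
  have h3 : MeasurePreserving (fun p : (Fin n → ℝ) × ℝ => (p.1, Q p.1 - p.2)) :=
    (MeasurePreserving.id volume).skew_product (g := fun y t => Q y - t) (by fun_prop)
      (Filter.Eventually.of_forall fun y => (Measure.measurePreserving_sub_left volume (Q y)).map_eq)
  have := h3.comp (h2.comp h1)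
  convert this using 1
  ext p
  · rfl
  · simp [swapE, hs]

theorem swap_int (Q : (Fin n → ℝ) → ℝ) (hQ : Measurable Q)
    (hs : ∀ y (t : ℝ), Q (fun i => y i + t) = Q y + t) (G1 G2 : ℝ → ℂ) (w : (Fin n → ℝ) → ℂ)
    (χ : ℝ → ℂ) (hχ : ∀ a b, χ (a + b) = χ a * χ b) (hw : ∀ y (t : ℝ), w (fun i => y i + t) = w y * χ t) :
    (∫ y, G1 (Q y) * w y) * (∫ t, G2 t * χ t) = (∫ y, G2 (Q y) * w y) * (∫ t, G1 t * χ t) := by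
  rw [← integral_prod_mul, ← integral_prod_mul]
  rw [← Measure.volume_eq_prod, ← (swapE_mp Q hQ hs).integral_comp (swapE Q hQ hs).measurableEmbedding]
  congr 1; ext p
  simp only [swapE, MeasurableEquiv.coe_mk, Equiv.coe_fn_mk, hs, hw]
  have : χ p.2 = χ (p.2 - Q p.1) * χ (Q p.1) := by rw [← hχ]; simp
  rw [this]
  simp
  ring

theorem swap_lint (Q : (Fin n → ℝ) → ℝ) (hQ : Measurable Q)
    (hs : ∀ y (t : ℝ), Q (fun i => y i + t) = Q y + t) (G1 G2 : ℝ → ENNReal) (w : (Fin n → ℝ) → ENNReal)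
    (χ : ℝ → ENNReal) (hχ : ∀ a b, χ (a + b) = χ a * χ b) (hw : ∀ y (t : ℝ), w (fun i => y i + t) = w y * χ t)
    (m1 : AEMeasurable (fun y => G1 (Q y) * w y)) (m2 : AEMeasurable (fun y => G2 (Q y) * w y))
    (m3 : AEMeasurable (fun y => G1 y * χ y)) (m4 : AEMeasurable (fun y => G2 y * χ y)) :
    (∫⁻ y, G1 (Q y) * w y) * (∫⁻ t, G2 t * χ t) = (∫⁻ y, G2 (Q y) * w y) * (∫⁻ t, G1 t * χ t) := by
  rw [← lintegral_prod_mul m1 m4, ← lintegral_prod_mul m2 m3]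
  rw [← Measure.volume_eq_prod, ← (swapE_mp Q hQ hs).lintegral_comp_emb (swapE Q hQ hs).measurableEmbedding]
  congr 1; ext p
  simp only [swapE, MeasurableEquiv.coe_mk, Equiv.coe_fn_mk, hs, hw]
  have : χ p.2 = χ (p.2 - Q p.1) * χ (Q p.1) := by rw [← hχ]; simp
  rw [this]
  simp
  ring

theorem Q_qmp (Q : (Fin n → ℝ) → ℝ) (hQ : Measurable Q)
    (hs : ∀ y (t : ℝ), Q (fun i => y i + t) = Q y + t) :
    Measure.QuasiMeasurePreserving Q volume volume := by
  refine ⟨hQ, ?_⟩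
  intro N0 hN
  obtain ⟨N, hsub, hNm, hN0⟩ := exists_measurable_superset_of_null hN
  refine measure_mono_null hsub ?_
  rw [Measure.map_apply hQ hNm]
  have h := swap_lint Q hQ hs (N.indicator 1) ((Icc (0:ℝ) 1).indicator 1) (fun _ => 1) (fun _ => 1)
    (by simp) (by simp) (((measurable_one.indicator hNm).comp hQ).mul_const _).aemeasurable 
    (((measurable_one.indicator measurableSet_Icc).comp hQ).mul_const _).aemeasurable
    ((measurable_one.indicator hNm).mul_const _).aemeasurable
    ((measurable_one.indicator measurableSet_Icc).mul_const _).aemeasurable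
  simp only [mul_one] at h
  rw [lintegral_indicator_one hNm, lintegral_indicator_one measurableSet_Icc, hN0] at h
  have e : ∫⁻ y, N.indicator 1 (Q y) = volume (Q ⁻¹' N) := by
    rw [← lintegral_indicator_one (hQ hNm)]; rfl
  rw [e] at h
  simpa using h

/-- Integrability of `h ∘ q` from integrability of `h`. -/
theorem u_integrable (Q : (Fin n → ℝ) → ℝ) (hQ : Measurable Q)
    (hs : ∀ y (t : ℝ), Q (fun i => y i + t) = Q y + t) (G G2 : ℝ → ℝ) (c : Fin n → ℝ)
    (α : ℝ) (hα : α = ∑ i, c i)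
    (hG : Integrable (fun t => G t * Real.exp (α * t)))
    (hG2m : Continuous G2) (hG2p : ∀ t, 0 < G2 t) 
    (hI : Integrable (fun y => G2 (Q y) * Real.exp (∑ i, c i * y i))) :
    Integrable (fun y => G (Q y) * Real.exp (∑ i, c i * y i)) := by
  have hGm : AEStronglyMeasurable G := by
    have h1 : AEStronglyMeasurable (fun t => (G t * Real.exp (α * t)) * Real.exp (-(α * t))) :=
      hG.1.mul (by fun_prop)
    refine h1.congr (Filter.Eventually.of_forall fun t => ?_)
    simp only [mul_assoc, ← Real.exp_add]
    simp
  have hum : AEStronglyMeasurable (fun y => G (Q y) * Real.exp (∑ i, c i * y i)) :=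
    (hGm.comp_quasiMeasurePreserving (Q_qmp Q hQ hs)).mul
      (Continuous.aestronglyMeasurable (by fun_prop))
  refine ⟨hum, ?_⟩
  have e0 : ∀ (a b : ℝ), ‖a * Real.exp b‖ₑ = ‖a‖ₑ * ENNReal.ofReal (Real.exp b) := by
    intro a b
    rw [enorm_mul, Real.enorm_of_nonneg (Real.exp_nonneg b)]
  have h := swap_lint Q hQ hs (fun t => ‖G t‖ₑ) (fun t => ‖G2 t‖ₑ) 
    (fun y => ENNReal.ofReal (Real.exp (∑ i, c i * y i))) (fun t => ENNReal.ofReal (Real.exp (α * t)))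
    (by intro a b; rw [← ENNReal.ofReal_mul (Real.exp_nonneg _), ← Real.exp_add, mul_add]) 
    (by intro y t
        rw [← ENNReal.ofReal_mul (Real.exp_nonneg _), ← Real.exp_add, hα, Finset.sum_mul,
          ← Finset.sum_add_distrib]
        simp only [mul_add])
    (by simpa only [e0] using hum.enorm)
    (by simpa only [e0] using hI.1.enorm)
    (by simpa only [e0] using hG.1.enorm)
    (by
      have : AEStronglyMeasurable (fun t => G2 t * Real.exp (α * t)) := by fun_prop
      simpa only [e0] using this.enorm)
  simp only [← e0] at h
  have f1 := hI.2
  have f2 := hG.2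
  rw [hasFiniteIntegral_iff_enorm] at f1 f2 ⊢
  have f3 : (∫⁻ t, ‖G2 t * Real.exp (α * t)‖ₑ) ≠ 0 := by
    rw [Ne, lintegral_eq_zero_iff (by fun_prop)]
    intro h0
    obtain ⟨t, ht⟩ := h0.exists
    have := mul_pos (hG2p t) (Real.exp_pos (α * t))
    simp at ht
    linarith [hG2p t]
  by_contra hcon
  rw [not_lt, top_le_iff] at hcon
  rw [hcon, ENNReal.top_mul f3] at h
  exact (ENNReal.mul_lt_top f1 f2).ne h.symm
end S
section X
variable {n : ℕ}

def exn (y : Fin n → ℝ) : Fin n → ℝ := fun i => Real.exp (y i)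
def lgn (y : Fin n → ℝ) : Fin n → ℝ := fun i => Real.log (y i)

theorem exn_mem (y : Fin n → ℝ) : exn y ∈ posOrth n := fun _ => Real.exp_pos _
theorem lgn_exn (y : Fin n → ℝ) : lgn (exn y) = y := by ext i; simp [lgn, exn]
theorem exn_lgn (x : Fin n → ℝ) (hx : x ∈ posOrth n) : exn (lgn x) = x := by
  ext i; simp [lgn, exn, Real.exp_log (hx i)]
theorem exn_inj : Function.Injective (exn (n := n)) := fun x y h => by
  rw [← lgn_exn x, h, lgn_exn]
theorem exn_image : exn '' univ = posOrth n := by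
  ext x; constructor
  · rintro ⟨y, -, rfl⟩; exact exn_mem y
  · intro hx; exact ⟨lgn x, trivial, exn_lgn x hx⟩
theorem exn_cont : Continuous (exn (n := n)) := by unfold exn; fun_prop
theorem lgn_meas : Measurable (lgn (n := n)) := by unfold lgn; fun_prop
theorem posOrth_open : IsOpen (posOrth n) := by
  have : posOrth n = ⋂ i, {x | 0 < x i} := by ext x; simp [posOrth]
  rw [this]
  exact isOpen_iInter_of_finite fun i => isOpen_lt continuous_const (continuous_apply i)

def exD (y : Fin n → ℝ) : (Fin n → ℝ) →L[ℝ] (Fin n → ℝ) :=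
  LinearMap.toContinuousLinearMap (Matrix.toLin' (Matrix.diagonal (exn y)))

theorem exD_has (y : Fin n → ℝ) : HasFDerivAt exn (exD y) y := by
  rw [hasFDerivAt_pi']
  intro i
  have h1 : HasFDerivAt (fun x : Fin n → ℝ => Real.exp (x i))
      (Real.exp (y i) • (ContinuousLinearMap.proj (R := ℝ) (φ := fun _ : Fin n => ℝ) i)) y :=
    ((ContinuousLinearMap.proj (R := ℝ) (φ := fun _ : Fin n => ℝ) i).hasFDerivAt (x := y)).exp
  have h2 : (ContinuousLinearMap.proj (R := ℝ) (φ := fun _ : Fin n => ℝ) i).comp (exD y) =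
      Real.exp (y i) • (ContinuousLinearMap.proj (R := ℝ) (φ := fun _ : Fin n => ℝ) i) := by
    refine ContinuousLinearMap.ext fun z => ?_
    simp [exD, exn, Matrix.mulVec_diagonal]
  rw [h2]
  exact h1

theorem exD_det (y : Fin n → ℝ) : |(exD y).det| = Real.exp (∑ i, y i) := by
  have : (exD y).det = Real.exp (∑ i, y i) := by
    unfold exD
    rw [ContinuousLinearMap.det, LinearMap.coe_toContinuousLinearMap, LinearMap.det_toLin', Matrix.det_diagonal, Real.exp_sum]
    rfl
  rw [this, abs_of_pos (Real.exp_pos _)]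

theorem cov_int {F : Type*} [NormedAddCommGroup F] [NormedSpace ℝ F] (g : (Fin n → ℝ) → F) :
    ∫ x in posOrth n, g x = ∫ y, Real.exp (∑ i, y i) • g (exn y) := by
  rw [← exn_image, integral_image_eq_integral_abs_det_fderiv_smul volume MeasurableSet.univ
    (fun x _ => (exD_has x).hasFDerivWithinAt) exn_inj.injOn]
  simp [exD_det]

theorem cov_integrable {F : Type*} [NormedAddCommGroup F] [NormedSpace ℝ F] (g : (Fin n → ℝ) → F) :
    IntegrableOn g (posOrth n) ↔ Integrable (fun y => Real.exp (∑ i, y i) • g (exn y)) := by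
  rw [← exn_image, integrableOn_image_iff_integrableOn_abs_det_fderiv_smul volume MeasurableSet.univ
    (fun x _ => (exD_has x).hasFDerivWithinAt) exn_inj.injOn]
  simp [exD_det]

theorem exn_qmp : Measure.QuasiMeasurePreserving (exn (n := n)) volume (volume.restrict (posOrth n)) := by
  refine ⟨exn_cont.measurable, Measure.AbsolutelyContinuous.mk ?_⟩
  intro N hN h0
  rw [Measure.map_apply exn_cont.measurable hN]
  rw [Measure.restrict_apply hN] at h0
  have : exn ⁻¹' N = lgn '' (N ∩ posOrth n) := by
    ext y; constructor
    · intro hy; exact ⟨exn y, ⟨hy, exn_mem y⟩, lgn_exn y⟩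
    · rintro ⟨x, ⟨h1, h2⟩, rfl⟩
      simpa [mem_preimage, exn_lgn x h2] using h1
  rw [this]
  apply addHaar_image_eq_zero_of_differentiableOn_of_addHaar_eq_zero _ _ h0
  rw [differentiableOn_pi]
  intro i x hx
  have : x i ≠ 0 := (hx.2 i).ne'
  exact (DifferentiableAt.log (f := fun x : Fin n → ℝ => x i) (x := x) (by fun_prop) this).differentiableWithinAt

theorem lgn_qmp : Measure.QuasiMeasurePreserving (lgn (n := n)) (volume.restrict (posOrth n)) volume := by
  refine ⟨lgn_meas, Measure.AbsolutelyContinuous.mk ?_⟩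
  intro N hN h0
  rw [Measure.map_apply lgn_meas hN, Measure.restrict_apply (lgn_meas hN)]
  have : lgn ⁻¹' N ∩ posOrth n ⊆ exn '' N := by
    rintro x ⟨h1, h2⟩
    exact ⟨lgn x, h1, exn_lgn x h2⟩
  refine measure_mono_null this ?_
  apply addHaar_image_eq_zero_of_differentiableOn_of_addHaar_eq_zero _ _ h0
  exact fun x hx => (exD_has x).differentiableAt.differentiableWithinAt

theorem cov1_int {F : Type*} [NormedAddCommGroup F] [NormedSpace ℝ F] (g : ℝ → F) :
    ∫ x in Ioi (0:ℝ), g x = ∫ y, Real.exp y • g (Real.exp y) := by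
  rw [← Real.range_exp, ← image_univ, integral_image_eq_integral_abs_deriv_smul MeasurableSet.univ
    (fun x _ => (Real.hasDerivAt_exp x).hasDerivWithinAt) Real.exp_injective.injOn]
  simp

theorem cov1_integrable {F : Type*} [NormedAddCommGroup F] [NormedSpace ℝ F] (g : ℝ → F) :
    IntegrableOn g (Ioi 0) ↔ Integrable (fun y => Real.exp y • g (Real.exp y)) := by
  rw [← Real.range_exp, ← image_univ, integrableOn_image_iff_integrableOn_abs_deriv_smul MeasurableSet.univ
    (fun x _ => (Real.hasDerivAt_exp x).hasDerivWithinAt) Real.exp_injective.injOn]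
  simp

theorem gam_integrable (k c : ℝ) (hk : 0 < k) (hc : 0 < c) :
    Integrable (fun y => Real.exp (-(k * Real.exp y)) * Real.exp (c * y)) := by
  have h := integrableOn_rpow_mul_exp_neg_mul_rpow (s := c - 1) (p := 1) (b := k) (by linarith) (by norm_num) hk
  rw [cov1_integrable] at h
  refine h.congr (Filter.Eventually.of_forall fun y => ?_)
  simp only [smul_eq_mul, Real.rpow_one, ← Real.exp_mul, ← Real.exp_add]
  congr 1; ring_nf

end X

section Z
variable {n : ℕ}

theorem cpow_exp (y : ℝ) (z : ℂ) : ((Real.exp y : ℝ) : ℂ) ^ z = cexp (z * y) := by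
  rw [cpow_def_of_ne_zero (by exact_mod_cast (Real.exp_pos y).ne'),
    ← Complex.ofReal_log (Real.exp_pos y).le, Real.log_exp, mul_comm]

theorem mellin_log (h : ℝ → ℝ) (s : ℂ) :
    mellin (fun t => (h t : ℂ)) s = ∫ t : ℝ, (h (Real.exp t) : ℂ) * cexp (s * t) := by
  rw [mellin, cov1_int]
  congr 1; ext t
  rw [cpow_exp, Complex.real_smul, smul_eq_mul, ← mul_assoc, Complex.ofReal_exp, ← Complex.exp_add,
    mul_comm]
  congr 2; ring

theorem mellinT_log (g : (Fin n → ℝ) → ℝ) (z : Fin n → ℂ) :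
    mellinT n g z = ∫ y, (g (exn y) : ℂ) * cexp (∑ i, z i * y i) := by
  rw [mellinT, cov_int]
  congr 1; ext y
  simp only [exn, cpow_exp]
  rw [← Complex.exp_sum, Complex.real_smul, ← mul_assoc, Complex.ofReal_exp, ← Complex.exp_add,
    mul_comm]
  congr 2
  push_cast
  rw [← Finset.sum_add_distrib]
  congr 1; ext i; ring

theorem gam_ne (s : ℂ) (hs : 0 < s.re) :
    ∫ t : ℝ, ((Real.exp (-Real.exp t) : ℝ) : ℂ) * cexp (s * t) ≠ 0 := by
  have h1 := mellin_log (fun t => Real.exp (-t)) s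
  rw [← h1]
  have h2 : mellin (fun t => ((Real.exp (-t) : ℝ) : ℂ)) s = Complex.Gamma s := by
    rw [Complex.Gamma_eq_integral hs, Complex.GammaIntegral_eq_mellin]
  rw [h2]
  exact Complex.Gamma_ne_zero_of_re_pos hs

theorem cost_Q (q : (Fin n → ℝ) → ℝ) (hq : IsCostFun n q) :
    ∃ Q : (Fin n → ℝ) → ℝ, Continuous Q ∧ (∀ y, Real.exp (Q y) = q (exn y)) ∧
      (∀ y (t : ℝ), Q (fun i => y i + t) = Q y + t) := by
  obtain ⟨hqc, hqp, hqh, hqb⟩ := hq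
  have hc : Continuous (fun y => q (exn y)) :=
    hqc.continuousOn.comp_continuous exn_cont exn_mem
  refine ⟨fun y => Real.log (q (exn y)), hc.log fun y => (hqp _ (exn_mem y)).ne',
    fun y => Real.exp_log (hqp _ (exn_mem y)), ?_⟩
  intro y t
  have : exn (fun i => y i + t) = fun i => Real.exp t * exn y i := by
    ext i; simp [exn, Real.exp_add, mul_comm]
  simp only [this]
  rw [hqh _ (Real.exp_pos t) _ (exn_mem y),
    Real.log_mul (Real.exp_pos t).ne' (hqp _ (exn_mem y)).ne', Real.log_exp, add_comm]

theorem cost_bound (q : (Fin n → ℝ) → ℝ) (hq : IsCostFun n q) :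
    ∃ B : ℝ, 0 < B ∧ ∀ x ∈ posOrth n, ∀ i, x i ≤ B * q x := by
  obtain ⟨hqc, hqp, hqh, hqb⟩ := hq
  obtain ⟨B, hB⟩ := (hqb 1).exists_norm_le
  refine ⟨max B 1, by positivity, ?_⟩
  intro x hx i
  have hp := hqp x hx
  have hm : (fun i => (q x)⁻¹ * x i) ∈ posOrth n := fun i => mul_pos (inv_pos.2 hp) (hx i)
  have h1 := hB (fun i => (q x)⁻¹ * x i) ⟨hm, by
    rw [hqh _ (inv_pos.2 hp) x hx]; exact inv_mul_cancel₀ hp.ne'⟩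
  have h2 := (norm_le_pi_norm (fun i => (q x)⁻¹ * x i) i).trans (h1.trans (le_max_left B 1))
  have h3 := (le_abs_self _).trans h2
  rwa [inv_mul_le_iff₀ hp, mul_comm] at h3

theorem exp_q_integrable (hn : 0 < n) (q : (Fin n → ℝ) → ℝ) (hq : IsCostFun n q)
    (Q : (Fin n → ℝ) → ℝ) (hQ : Continuous Q) (hQe : ∀ y, Real.exp (Q y) = q (exn y))
    (c : Fin n → ℝ) (hc : ∀ i, 0 < c i) :
    Integrable (fun y => Real.exp (-Real.exp (Q y)) * Real.exp (∑ i, c i * y i)) := by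
  obtain ⟨B, hB0, hB⟩ := cost_bound q hq
  have hn' : (0:ℝ) < n := by exact_mod_cast hn
  set k : ℝ := (n * B)⁻¹ with hk
  have hk0 : 0 < k := by positivity
  have hprod : Integrable (fun y : Fin n → ℝ => ∏ i, (Real.exp (-(k * Real.exp (y i))) * Real.exp (c i * y i))) :=
    Integrable.fintype_prod (f := fun i y => Real.exp (-(k * Real.exp y)) * Real.exp (c i * y))
      (fun i => gam_integrable k (c i) hk0 (hc i))
  refine hprod.mono' (Continuous.aestronglyMeasurable (by fun_prop)) (Filter.Eventually.of_forall fun y => ?_)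
  rw [Real.norm_of_nonneg (by positivity), Finset.prod_mul_distrib, ← Real.exp_sum, ← Real.exp_sum]
  gcongr
  rw [Finset.sum_neg_distrib, neg_le_neg_iff, ← Finset.mul_sum, hQe, hk, inv_mul_le_iff₀ (by positivity)]
  calc ∑ i, Real.exp (y i) ≤ ∑ i : Fin n, B * q (exn y) :=
        Finset.sum_le_sum fun i _ => hB (exn y) (exn_mem y) i
    _ = _ := by simp; ring

theorem cont_ft (G : ℝ → ℝ) (α : ℝ) (hG : Integrable (fun t => G t * Real.exp (α * t))) :
    Continuous (fun τ : ℝ => ∫ t : ℝ, (G t : ℂ) * cexp ((α + I * τ) * t)) := by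
  have e : ∀ (τ t : ℝ), (G t : ℂ) * cexp ((α + I * τ) * t) =
      ((G t * Real.exp (α * t) : ℝ) : ℂ) * cexp ((τ * t : ℝ) * I) := by
    intro τ t
    push_cast
    rw [mul_assoc, ← Complex.exp_add]
    congr 2; ring
  simp only [e]
  refine continuous_of_dominated (bound := fun t => ‖G t * Real.exp (α * t)‖) ?_ ?_ hG.norm ?_
  · intro τ
    exact hG.ofReal.1.mul (Continuous.aestronglyMeasurable (by fun_prop))
  · intro τ
    refine Filter.Eventually.of_forall fun t => ?_
    rw [norm_mul, Complex.norm_exp_ofReal_mul_I, mul_one, Complex.norm_real]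
  · refine Filter.Eventually.of_forall fun t => ?_
    fun_prop

theorem null_sum (hn : 0 < n) (Z : ℝ → Prop) (hZ : MeasurableSet {τ | Z τ}) :
    volume {ξ : Fin n → ℝ | Z (∑ i, ξ i)} = 0 ↔ volume {τ | Z τ} = 0 := by
  have := ae_comp_linearMap_mem_iff (∑ i, LinearMap.proj (R := ℝ) (φ := fun _ : Fin n => ℝ) i)
    (volume : Measure (Fin n → ℝ)) (volume : Measure ℝ) (by
      intro t
      refine ⟨Pi.single ⟨0, hn⟩ t, ?_⟩
      simp) hZ.compl
  rw [ae_iff, ae_iff] at this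
  simpa using this

theorem vf_int (c : Fin n → ℝ) (f : (Fin n → ℝ) → ℝ) :
    IntegrableOn (fun x => |f x| ^ 2 * ∏ i, x i ^ (2 * (1 - c i) - 1)) (posOrth n) ↔
    Integrable (fun y => (f (exn y) * Real.exp (∑ i, (1 - c i) * y i)) ^ 2) := by
  rw [cov_integrable]
  apply iff_of_eq
  congr 1; ext y
  simp only [exn, ← Real.exp_mul, ← Real.exp_sum, sq_abs, smul_eq_mul, mul_pow]
  rw [mul_left_comm, ← Real.exp_add, ← Real.exp_nat_mul, ← Finset.sum_add_distrib, Finset.mul_sum]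
  congr 3; ext i
  push_cast; ring

theorem Rhq_log (q : (Fin n → ℝ) → ℝ) (h : ℝ → ℝ)
    (Q : (Fin n → ℝ) → ℝ) (hQe : ∀ y, Real.exp (Q y) = q (exn y))
    (c : Fin n → ℝ) (f : (Fin n → ℝ) → ℝ) (s : Fin n → ℝ) :
    Rhq n q h f (exn s) = Real.exp (-∑ i, c i * s i) *
      ∫ y, (h (Real.exp (Q (s + y))) * Real.exp (∑ i, c i * (s + y) i)) *
        (f (exn y) * Real.exp (∑ i, (1 - c i) * y i)) := by
  rw [Rhq, cov_int, ← integral_const_mul]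
  congr 1; ext y
  have : (fun i => exn s i * exn y i) = exn (s + y) := by
    ext i; simp [exn, Real.exp_add]
  rw [this, hQe, smul_eq_mul]
  have e : Real.exp (∑ i, y i) = Real.exp (-∑ i, c i * s i) * Real.exp (∑ i, c i * (s + y) i) *
      Real.exp (∑ i, (1 - c i) * y i) := by
    rw [← Real.exp_add, ← Real.exp_add, ← Finset.sum_neg_distrib, ← Finset.sum_add_distrib,
      ← Finset.sum_add_distrib]
    congr 2; ext i
    simp; ring
  rw [e]; ring

end Z

/-- Theorem: for `h ∈ L¹_α ∩ L²_α`, `R^h_q` is injective on `L²_{I-c}(ℝ^n_+)` iff the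
zero set of `(M e^{-q})` on the plane `Re z = c` has measure zero in `ℝ^n` and the zero
set of `Mh` on the line `Re s = α` has measure zero in `ℝ`. -/
theorem rhq_injective_L2_iff
    (n : ℕ) (hn : 2 ≤ n) (q : (Fin n → ℝ) → ℝ) (hq : IsCostFun n q)
    (c : Fin n → ℝ) (hc : ∀ i, 0 < c i) (α : ℝ) (hα : α = ∑ i, c i)
    (h : ℝ → ℝ) (hh1 : MemL1w1 α h) (hh2 : MemL2w1 α h) :
    (∀ f : (Fin n → ℝ) → ℝ, MemL2w n (fun i => 1 - c i) f →
        (∀ p ∈ posOrth n, Rhq n q h f p = 0) →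
        ∀ᵐ x ∂(volume.restrict (posOrth n)), f x = 0) ↔
      (volume {ξ : Fin n → ℝ |
          mellinT n (fun x => Real.exp (-q x)) (fun i => (c i : ℂ) + I * (ξ i : ℂ)) = 0} = 0 ∧
        volume {τ : ℝ |
          mellin (fun t => (h t : ℂ)) ((α : ℂ) + I * (τ : ℂ)) = 0} = 0) := by
  obtain ⟨Q, hQ, hQe, hQs⟩ := cost_Q q hq
  have hn0 : 0 < n := by omega
  have hG : Integrable (fun t => h (Real.exp t) * Real.exp (α * t)) := by
    rw [MemL1w1, cov1_integrable] at hh1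
    refine hh1.congr (Filter.Eventually.of_forall fun t => ?_)
    simp only [smul_eq_mul, ← Real.exp_mul]
    rw [mul_left_comm, ← Real.exp_add]
    congr 2; ring
  have hG' : Integrable (fun t => (h (Real.exp t)) ^ 2 * Real.exp ((2 * α) * t)) := by
    have h2 := hh2.2
    rw [cov1_integrable] at h2
    refine h2.congr (Filter.Eventually.of_forall fun t => ?_)
    simp only [smul_eq_mul, ← Real.exp_mul, sq_abs]
    rw [mul_left_comm, ← Real.exp_add]
    congr 2; ring
  have hcE : Continuous (fun t => Real.exp (-Real.exp t)) := by fun_prop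
  set u : (Fin n → ℝ) → ℝ := fun y => h (Real.exp (Q y)) * Real.exp (∑ i, c i * y i) with hu
  have hu1 : Integrable u :=
    u_integrable Q hQ.measurable hQs (fun t => h (Real.exp t)) (fun t => Real.exp (-Real.exp t)) c α hα hG
      hcE (fun t => Real.exp_pos _) (exp_q_integrable hn0 q hq Q hQ hQe c hc)
  have hu2 : MemLp u 2 := by
    rw [memLp_two_iff_integrable_sq hu1.1]
    have := u_integrable Q hQ.measurable hQs (fun t => (h (Real.exp t)) ^ 2)
      (fun t => Real.exp (-Real.exp t)) (fun i => 2 * c i) (2 * α) (by rw [hα, Finset.mul_sum]) hG'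
      hcE (fun t => Real.exp_pos _)
      (exp_q_integrable hn0 q hq Q hQ hQe (fun i => 2 * c i) (fun i => by have := hc i; positivity))
    refine this.congr (Filter.Eventually.of_forall fun y => ?_)
    simp only [hu, mul_pow]
    rw [← Real.exp_nat_mul, Finset.mul_sum]
    congr 3; ext i; push_cast; ring
  have step1 : (∀ f : (Fin n → ℝ) → ℝ, MemL2w n (fun i => 1 - c i) f →
        (∀ p ∈ posOrth n, Rhq n q h f p = 0) →
        ∀ᵐ x ∂(volume.restrict (posOrth n)), f x = 0) ↔
      (∀ v : (Fin n → ℝ) → ℝ, MemLp v 2 → (∀ s, ∫ y, u (s + y) * v y = 0) → v =ᵐ[volume] 0) := by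
    constructor
    · intro H v hv hs
      set f : (Fin n → ℝ) → ℝ := fun x => v (lgn x) * Real.exp (-∑ i, (1 - c i) * lgn x i) with hf
      have hfv : ∀ y, f (exn y) * Real.exp (∑ i, (1 - c i) * y i) = v y := by
        intro y
        simp only [hf, lgn_exn]
        rw [mul_assoc, ← Real.exp_add]; simp
      have hm : MemL2w n (fun i => 1 - c i) f := by
        refine ⟨?_, ?_⟩
        · refine (hv.1.comp_quasiMeasurePreserving lgn_qmp).mul ?_
          have : Continuous (fun y : Fin n → ℝ => Real.exp (-∑ i, (1 - c i) * y i)) := by fun_prop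
          exact (this.measurable.comp lgn_meas).aestronglyMeasurable
        · rw [vf_int c f]
          simp only [hfv]
          exact hv.integrable_sq
      have h0 := H f hm (by
        intro p hp
        rw [← exn_lgn p hp, Rhq_log q h Q hQe c f]
        simp only [hfv]
        have := hs (lgn p)
        simp only [hu] at this
        rw [this, mul_zero])
      filter_upwards [exn_qmp.ae h0] with y hy
      rw [← hfv y, hy]; simp
    · intro H f hf hR
      set v : (Fin n → ℝ) → ℝ := fun y => f (exn y) * Real.exp (∑ i, (1 - c i) * y i) with hv
      have hvm : AEStronglyMeasurable v :=
        (hf.1.comp_quasiMeasurePreserving exn_qmp).mul (Continuous.aestronglyMeasurable (by fun_prop))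
      have hv2 : MemLp v 2 := by
        rw [memLp_two_iff_integrable_sq hvm]
        exact (vf_int c f).1 hf.2
      have h0 := H v hv2 (by
        intro s
        have := hR (exn s) (exn_mem s)
        rw [Rhq_log q h Q hQe c f] at this
        exact (mul_eq_zero.1 this).resolve_left (Real.exp_pos _).ne')
      filter_upwards [lgn_qmp.ae h0, ae_restrict_mem posOrth_open.measurableSet] with x hx hxp
      simp only [hv, exn_lgn x hxp] at hx
      simpa [(Real.exp_pos _).ne'] using hx
  rw [step1, aux_C2 u hu1 hu2]
  have hZm : MeasurableSet {τ : ℝ | mellin (fun t => (h t : ℂ)) ((α : ℂ) + I * (τ : ℂ)) = 0} := by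
    simp only [mellin_log]
    exact (isClosed_eq (cont_ft _ α hG) continuous_const).measurableSet
  rw [← null_sum hn0 _ hZm, ← measure_union_null_iff]
  apply Eq.congr_left
  congr 1
  ext ξ
  simp only [mem_union, mem_ofPred_eq]
  have hsum : ∑ i, ((c i : ℂ) + I * (ξ i : ℂ)) = (α : ℂ) + I * ((∑ i, ξ i : ℝ) : ℂ) := by
    rw [hα, Finset.sum_add_distrib, ← Finset.mul_sum]; push_cast; rfl
  have hsw := swap_int Q hQ.measurable hQs (fun t => (h (Real.exp t) : ℂ))
    (fun t => ((Real.exp (-Real.exp t) : ℝ) : ℂ))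
    (fun y => cexp (∑ i, ((c i : ℂ) + I * (ξ i : ℂ)) * y i))
    (fun t => cexp (((α : ℂ) + I * ((∑ i, ξ i : ℝ) : ℂ)) * t))
    (by intro a b; rw [← Complex.exp_add]; congr 1; push_cast; ring)
    (by intro y t
        rw [← Complex.exp_add, ← hsum, Finset.sum_mul, ← Finset.sum_add_distrib]
        congr 2; ext i; push_cast; ring)
  have hg := gam_ne ((α : ℂ) + I * ((∑ i, ξ i : ℝ) : ℂ)) (by
    have : 0 < α := by
      rw [hα]
      exact Finset.sum_pos (fun i _ => hc i) ⟨⟨0, hn0⟩, Finset.mem_univ _⟩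
    simpa using this)
  have e1 : ∫ y, (u y : ℂ) * cexp (I * ∑ i, (ξ i : ℂ) * y i) =
      ∫ y, (h (Real.exp (Q y)) : ℂ) * cexp (∑ i, ((c i : ℂ) + I * (ξ i : ℂ)) * y i) := by
    congr 1; ext y
    simp only [hu]
    push_cast
    rw [mul_assoc, ← Complex.exp_add, Finset.mul_sum, ← Finset.sum_add_distrib]
    congr 3; ext i; ring
  rw [e1, mellin_log, mellinT_log]
  simp only [← hQe]
  rw [← mul_eq_zero, ← hsw, mul_eq_zero, or_iff_left hg]
end
end

section
/- Let n ≥ 2, let q : ℝ^n_+ → ℝ satisfy the cost-function conditions, let c ∈ ℝ^n_+, set α = c_1 + ⋯ + c_n, and let h ∈ L^1_α(ℝ^1_+). Then the operator R^h_q is injective on L^∞_{I−c}(ℝ^n_+) (i.e., if f ∈ L^∞_{I−c}(ℝ^n_+) and (R^h_q f)(p) = 0 for all p ∈ ℝ^n_+, then f = 0 a.e.) if and only if (M e^{−q})(c + iξ) ≠ 0 for every ξ ∈ ℝ^n and (Mh)(α + iτ) ≠ 0 for every τ ∈ ℝ. -/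
open MeasureTheory Complex Set

noncomputable section

/-- Membership in `L^∞_c(ℝ^n_+)`: measurable with `ess sup |f(x) x^c| < ∞`. -/
def MemLinfw (n : ℕ) (c : Fin n → ℝ) (f : (Fin n → ℝ) → ℝ) : Prop :=
  AEStronglyMeasurable f (volume.restrict (posOrth n)) ∧
  ∃ K : ℝ, ∀ᵐ x ∂(volume.restrict (posOrth n)), |f x * ∏ i, x i ^ c i| ≤ K

namespace WT
open Filter Topology

variable {V : Type*} [NormedAddCommGroup V] [InnerProductSpace ℝ V] [FiniteDimensional ℝ V]
  [MeasurableSpace V] [BorelSpace V]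

def om (g : V → ℂ) (y : V) : ℝ := ∫ z, ‖g z - g (z - y)‖

lemma om_eq (g : V → ℂ) (hg : Integrable g) (y : V) :
    om g y = ‖hg.toL1 g - ((DomAddAct.mk (-y)) +ᵥ (hg.toL1 g))‖ := by
  rw [L1.norm_eq_integral_norm]
  unfold om
  apply integral_congr_ae
  have h1 := hg.coeFn_toL1
  have h2 : (DomAddAct.mk (-y) +ᵥ (hg.toL1 g) : Lp ℂ 1 (volume : Measure V)) =ᵐ[volume] fun z => (hg.toL1 g) (-y + z) := by
    exact Lp.coeFn_compMeasurePreserving _ _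
  have h3 : ∀ᵐ z : V, (hg.toL1 g) (-y + z) = g (-y+z) :=
    (measurePreserving_add_left volume (-y)).quasiMeasurePreserving.ae h1
  have h4 := Lp.coeFn_sub (hg.toL1 g) (DomAddAct.mk (-y) +ᵥ (hg.toL1 g) : Lp ℂ 1 (volume : Measure V))
  filter_upwards [h1, h2, h3, h4] with z a b c d
  rw [d, Pi.sub_apply, a, b, c, neg_add_eq_sub]

lemma om_cont (g : V → ℂ) (hg : Integrable g) : Continuous (om g) := by
  rw [show om g = fun y : V => ‖hg.toL1 g - ((DomAddAct.mk (-y)) +ᵥ (hg.toL1 g))‖ from funext (om_eq g hg)]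
  refine (continuous_const.sub ?_).norm
  have : Continuous fun y : V => DomAddAct.mk (-y) := by
    exact DomAddAct.continuous_mk.comp continuous_neg
  have hF : Fact ((1 : ENNReal) ≠ ⊤) := ⟨ENNReal.one_ne_top⟩
  exact this.vadd continuous_const

lemma om_zero (g : V → ℂ) : om g 0 = 0 := by simp [om]

lemma om_nonneg (g : V → ℂ) (y : V) : 0 ≤ om g y := integral_nonneg fun _ => norm_nonneg _

lemma om_le (g : V → ℂ) (hg : Integrable g) (y : V) : om g y ≤ 2 * ∫ z, ‖g z‖ := by
  unfold om
  have e : ∫ z, ‖g (z - y)‖ = ∫ z, ‖g z‖ := integral_sub_right_eq_self (fun z => ‖g z‖) y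
  have : ∫ z, ‖g z - g (z - y)‖ ≤ ∫ z, (‖g z‖ + ‖g (z - y)‖) :=
    integral_mono ((hg.sub (hg.comp_sub_right y)).norm) (hg.norm.add (hg.comp_sub_right y).norm)
      fun z => norm_sub_le _ _
  rw [integral_add hg.norm (hg.comp_sub_right y).norm, e] at this
  linarith

lemma om_tendsto (K g : V → ℂ) (hK : Integrable K) (hg : Integrable g) :
    Tendsto (fun ε : ℝ => ∫ y, ‖K y‖ * om g (ε • y)) (𝓝 0) (𝓝 0) := by
  have : Tendsto (fun ε : ℝ => ∫ y, ‖K y‖ * om g (ε • y)) (𝓝 0) (𝓝 (∫ y : V, (0:ℝ))) := by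
    apply tendsto_integral_filter_of_dominated_convergence (fun y => ‖K y‖ * (2 * ∫ z, ‖g z‖))
    · refine Eventually.of_forall fun ε => ?_
      refine hK.1.norm.mul ?_
      exact ((om_cont g hg).comp (continuous_const_smul ε)).aestronglyMeasurable
    · refine Eventually.of_forall fun ε => Eventually.of_forall fun y => ?_
      rw [norm_mul, norm_norm, Real.norm_of_nonneg (om_nonneg _ _)]
      gcongr
      exact om_le g hg _
    · exact hK.norm.mul_const _
    · refine Eventually.of_forall fun y => ?_
      have : Continuous fun ε : ℝ => ‖K y‖ * om g (ε • y) :=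
        continuous_const.mul ((om_cont g hg).comp (continuous_id.smul continuous_const))
      have h := this.tendsto 0
      simpa [om_zero] using h
  simpa using this

lemma int3 {f K g : V → ℂ} (hf : Measurable f) {C : ℝ} (hC : ∀ x, ‖f x‖ ≤ C)
    (hK : Integrable K) (hg : Integrable g) (x : V) :
    Integrable (fun p : V × V => f (x + p.1 + p.2) * (K p.1 * g p.2)) (volume.prod volume) := by
  apply (hK.mul_prod hg).bdd_mul (c := C)
  · exact (hf.comp (by fun_prop)).aestronglyMeasurable
  · exact Eventually.of_forall fun p => hC _

lemma bddint {f g : V → ℂ} (hf : Measurable f) {C : ℝ} (hC : ∀ x, ‖f x‖ ≤ C)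
    (hg : Integrable g) : Integrable fun x => f x * g x :=
  hg.bdd_mul hf.aestronglyMeasurable (Eventually.of_forall hC)

lemma est {f K g : V → ℂ} (hf : Measurable f) {C : ℝ} (hC : ∀ x, ‖f x‖ ≤ C)
    (hK : Integrable K) (hg : Integrable g) (ann : ∀ x, ∫ y, f (x + y) * K y = 0) :
    ‖∫ y, K y‖ * ‖∫ z, f z * g z‖ ≤ C * ∫ y, ‖K y‖ * om g y := by
  have i3 := int3 hf hC hK hg 0
  have e1 : ∫ y, ∫ x, f (0 + y + x) * (K y * g x) = 0 := by
    rw [integral_integral_swap i3]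
    have : ∀ x, ∫ y, f (0 + y + x) * (K y * g x) = 0 := by
      intro x
      have := ann x
      calc _ = ∫ y, f (x + y) * K y * g x := by
            congr 1; ext y; rw [zero_add, add_comm y x]; ring
        _ = 0 := by rw [integral_mul_const, this, zero_mul]
    simp only [this, integral_zero]
  have e2 : ∀ y, ∫ x, f (0 + y + x) * (K y * g x) = K y * ∫ z, f z * g (z - y) := by
    intro y
    rw [← integral_const_mul, ← integral_sub_right_eq_self _ y]
    congr 1; ext z; rw [zero_add, add_sub_cancel]; ring
  simp_rw [e2] at e1
  have ib : Integrable fun y => K y * ∫ z, f z * g (z - y) := by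
    have := i3.integral_prod_left
    simpa only [e2] using this
  have e3 : (∫ y, K y) * ∫ z, f z * g z = ∫ y, K y * ∫ z, f z * (g z - g (z - y)) := by
    rw [← integral_mul_const, ← sub_zero (∫ y, K y * ∫ z, f z * g z), ← e1, ← integral_sub (hK.mul_const _) ib]
    congr 1; ext y
    rw [← mul_sub, ← integral_sub (bddint hf hC hg) (bddint hf hC (hg.comp_sub_right y))]
    simp only [mul_sub]
  rw [← norm_mul, e3, ← integral_const_mul]
  have C0 : 0 ≤ C := (norm_nonneg _).trans (hC 0)
  apply norm_integral_le_of_norm_le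
  · apply Integrable.const_mul
    apply hK.norm.mul_bdd (c := 2 * ∫ z, ‖g z‖) (om_cont g hg).aestronglyMeasurable
    exact Eventually.of_forall fun y => by
      rw [Real.norm_of_nonneg (om_nonneg _ _)]; exact om_le g hg y
  · refine Eventually.of_forall fun y => ?_
    rw [norm_mul, mul_left_comm]
    gcongr
    unfold om
    rw [← integral_const_mul]
    apply norm_integral_le_of_norm_le
    · exact ((hg.sub (hg.comp_sub_right y)).norm).const_mul _
    · refine Eventually.of_forall fun z => ?_
      rw [norm_mul]
      gcongr
      exact hC z

lemma core {f K w Φ : V → ℂ} (hf : Measurable f) {C : ℝ} (hC : ∀ x, ‖f x‖ ≤ C)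
    (hK : Integrable K) (hw : Integrable w) (hΦ : Integrable Φ)
    (ann : ∀ x, ∫ y, f (x + y) * K y = 0)
    (rep : ∀ u, ∫ y, Φ (u - y) * w y = Φ u)
    (small : ∫ y, ‖K y‖ * om w y < ‖∫ y, K y‖) :
    ∫ y, f y * Φ y = 0 := by
  set F : V → ℂ := fun x => ∫ y, f (x + y) * Φ y with hF
  have hFm : Measurable F := by
    obtain ⟨Φ', h1, h2⟩ := hΦ.1
    have : F = fun x => ∫ y, f (x + y) * Φ' y := by
      ext x
      apply integral_congr_ae
      filter_upwards [h2] with y hy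
      rw [hy]
    rw [this]
    apply StronglyMeasurable.measurable
    apply StronglyMeasurable.integral_prod_right (f := fun x y => f (x+y) * Φ' y)
    apply Measurable.stronglyMeasurable
    exact (hf.comp (by fun_prop)).mul (h1.measurable.comp measurable_snd)
  set A : ℝ := C * ∫ y, ‖Φ y‖
  have hFA : ∀ x, ‖F x‖ ≤ A := by
    intro x
    simp only [A]
    rw [← integral_const_mul]
    apply norm_integral_le_of_norm_le (hΦ.norm.const_mul _)
    refine Eventually.of_forall fun z => ?_
    rw [norm_mul]; gcongr; exact hC _
  have Fann : ∀ x, ∫ y, F (x + y) * K y = 0 := by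
    intro x
    have i3 := int3 hf hC hK hΦ x
    calc _ = ∫ y, ∫ z, f (x + y + z) * (K y * Φ z) := by
          congr 1; ext y; simp only [hF]; rw [← integral_mul_const]; congr 1; ext z; ring
      _ = ∫ z, ∫ y, f (x + y + z) * (K y * Φ z) := integral_integral_swap i3
      _ = ∫ z, 0 := by
          congr 1; ext z
          rw [← zero_mul (Φ z), ← ann (x + z), ← integral_mul_const]
          congr 1; ext y; rw [add_right_comm]; ring
      _ = 0 := by simp
  have Frep : ∀ x, ∫ y, F (x + y) * w y = F x := by
    intro x
    calc _ = ∫ y, ∫ u, f (x + u) * (w y * Φ (u - y)) := by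
          congr 1; ext y; simp only [hF]; rw [← integral_mul_const, ← integral_sub_right_eq_self _ y]
          congr 1; ext z; rw [add_assoc, add_sub_cancel]; ring
      _ = ∫ u, ∫ y, f (x + u) * (w y * Φ (u - y)) := by
          apply integral_integral_swap
          apply Integrable.bdd_mul (c := C)
          · have := (hw.convolution_integrand (ContinuousLinearMap.mul ℂ ℂ) hΦ)
            exact this.swap
          · exact (hf.comp (by fun_prop)).aestronglyMeasurable
          · exact Eventually.of_forall fun p => hC _
      _ = _ := by
          simp only [hF]; congr 1; ext u; rw [integral_const_mul, ← rep u]; congr 2; ext y; ring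
  -- contraction
  have key : ∀ B, (∀ x, ‖F x‖ ≤ B) → ∀ x, ‖∫ y, K y‖ * ‖F x‖ ≤ B * ∫ y, ‖K y‖ * om w y := by
    intro B hB x
    have := est (f := fun z => F (x + z)) (hFm.comp (by fun_prop)) (fun z => hB _) hK hw
      (fun z => by simpa only [add_assoc] using Fann (x + z))
    rwa [Frep x] at this
  set S := ⨆ x, ‖F x‖
  have bdd : BddAbove (range fun x => ‖F x‖) := ⟨A, by rintro _ ⟨x, rfl⟩; exact hFA x⟩
  have hS : ∀ x, ‖F x‖ ≤ S := fun x => le_ciSup bdd x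
  have k0 : 0 < ‖∫ y, K y‖ := lt_of_le_of_lt (integral_nonneg fun y => mul_nonneg (norm_nonneg _) (om_nonneg _ _)) small
  have hS2 : S ≤ (S * ∫ y, ‖K y‖ * om w y) / ‖∫ y, K y‖ := by
    apply ciSup_le
    intro x
    rw [le_div_iff₀ k0, mul_comm]
    exact key S hS x
  have S0 : 0 ≤ S := (norm_nonneg _).trans (hS 0)
  have : S ≤ 0 := by
    by_contra hh
    push Not at hh
    rw [le_div_iff₀ k0] at hS2
    have := lt_of_mul_lt_mul_left (hS2.trans_lt' (mul_lt_mul_of_pos_left small hh)) S0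
    exact lt_irrefl _ this
  have h0 := (hS 0).trans this
  have : F 0 = 0 := norm_le_zero_iff.1 h0
  simpa [hF] using this



open FourierTransform Real in
lemma repro {ψ w : V → ℂ} (hψ : Integrable ψ) (hw : Integrable w)
    (h1 : ∀ ξ, ψ ξ ≠ 0 → ∫ y, (𝐞 (inner ℝ y ξ) : ℂ) * w y = 1) (u : V) :
    ∫ y, 𝓕 ψ (u - y) * w y = 𝓕 ψ u := by
  have hI : Integrable (fun p : V × V => (𝐞 (-(inner ℝ p.2 (u - p.1))) : ℂ) * (w p.1 * ψ p.2))
      (volume.prod volume) := by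
    apply (hw.mul_prod hψ).bdd_mul (c := 1)
    · apply Continuous.aestronglyMeasurable
      exact continuous_subtype_val.comp (Real.continuous_fourierChar.comp (by fun_prop))
    · exact Eventually.of_forall fun p => (Circle.norm_coe _).le
  calc _ = ∫ y, ∫ ξ, (𝐞 (-(inner ℝ ξ (u - y))) : ℂ) * (w y * ψ ξ) := by
        congr 1; ext y
        rw [Real.fourier_eq, ← integral_mul_const]
        congr 1; ext ξ
        rw [Circle.smul_def, smul_eq_mul]; ring
    _ = ∫ ξ, ∫ y, (𝐞 (-(inner ℝ ξ (u - y))) : ℂ) * (w y * ψ ξ) := integral_integral_swap hI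
    _ = ∫ ξ, 𝐞 (-(inner ℝ ξ u)) • ψ ξ := by
        congr 1; ext ξ
        by_cases h0 : ψ ξ = 0
        · simp [h0]
        rw [Circle.smul_def, smul_eq_mul, ← mul_one (_ * ψ ξ), ← h1 ξ h0, ← integral_const_mul]
        congr 1; ext y
        have : -(inner ℝ ξ (u - y)) = -(inner ℝ ξ u) + inner ℝ y ξ := by
          rw [inner_sub_right, real_inner_comm ξ y]; ring
        rw [this, AddChar.map_add_eq_mul, Circle.coe_mul]; ring
    _ = _ := by rw [Real.fourier_eq]

open Module in
def sc (ε : ℝ) (w : V → ℂ) (y : V) : ℂ := (ε ^ finrank ℝ V : ℝ) • w (ε • y)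

open Module in
lemma sc_int {E : Type*} [NormedAddCommGroup E] [NormedSpace ℝ E] {ε : ℝ} (hε : 0 < ε) (G : V → E) :
    ∫ y, (ε ^ finrank ℝ V : ℝ) • G (ε • y) = ∫ y, G y := by
  rw [integral_smul, Measure.integral_comp_smul, abs_of_pos (by positivity), smul_smul,
    mul_inv_cancel₀ (by positivity), one_smul]

lemma sc_integrable {ε : ℝ} (hε : 0 < ε) {w : V → ℂ} (hw : Integrable w) : Integrable (sc ε w) := by
  unfold sc
  exact (hw.comp_smul hε.ne').smul (ε ^ Module.finrank ℝ V : ℝ)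

lemma sc_om {ε : ℝ} (hε : 0 < ε) (w : V → ℂ) (y : V) : om (sc ε w) y = om w (ε • y) := by
  unfold om
  rw [← sc_int hε fun z => ‖w z - w (z - ε • y)‖]
  congr 1; ext z
  rw [sc, sc, ← smul_sub, norm_smul, Real.norm_of_nonneg (by positivity), smul_eq_mul, smul_sub]

lemma sc_norm {ε : ℝ} (hε : 0 < ε) (w g : V → ℂ) :
    ∫ y, ‖sc ε w y‖ * om g y = ∫ y, ‖w y‖ * om g (ε⁻¹ • y) := by
  rw [← sc_int hε fun y => ‖w y‖ * om g (ε⁻¹ • y)]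
  congr 1; ext z
  rw [sc, norm_smul, Real.norm_of_nonneg (by positivity), smul_eq_mul, smul_smul,
    inv_mul_cancel₀ hε.ne', one_smul, mul_assoc]

open FourierTransform Real in
lemma sc_fourier {ε : ℝ} (hε : 0 < ε) (w : V → ℂ) (ξ : V) :
    ∫ y, (𝐞 (inner ℝ y ξ) : ℂ) * sc ε w y = ∫ y, (𝐞 (inner ℝ y (ε⁻¹ • ξ)) : ℂ) * w y := by
  rw [← sc_int hε fun y => (𝐞 (inner ℝ y (ε⁻¹ • ξ)) : ℂ) * w y]
  congr 1; ext z
  rw [sc, mul_smul_comm, real_inner_smul_left, real_inner_smul_right, ← mul_assoc,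
    mul_inv_cancel₀ hε.ne', one_mul]

open FourierTransform Real ContDiff in
variable (V) in
lemma exists_bump : ∃ w χ : V → ℂ, ContDiff ℝ ∞ χ ∧ HasCompactSupport χ ∧
    (∀ ξ, ‖ξ‖ ≤ 1 → χ ξ = 1) ∧ Integrable w ∧ w = 𝓕 χ ∧
    ∀ ξ, ∫ y, (𝐞 (inner ℝ y ξ) : ℂ) * w y = χ ξ := by
  let b : ContDiffBump (0 : V) := ⟨1, 2, by norm_num, by norm_num⟩
  let χ : V → ℂ := fun x => (b x : ℂ)
  have c1 : ContDiff ℝ ∞ χ := Complex.ofRealCLM.contDiff.comp b.contDiff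
  have c2 : HasCompactSupport χ := b.hasCompactSupport.comp_left (g := fun x : ℝ => (x : ℂ)) rfl
  let s : SchwartzMap V ℂ := c2.toSchwartzMap c1
  refine ⟨𝓕 χ, χ, c1, c2, ?_, ?_, rfl, ?_⟩
  · intro ξ hξ
    simp only [χ]
    rw [b.one_of_mem_closedBall (by simpa [b] using hξ)]; simp
  · exact (𝓕 s).integrable
  · intro ξ
    have h : 𝓕⁻ (𝓕 s) = s := FourierTransform.fourierInv_fourier_eq s
    have h2 : (𝓕⁻ (𝓕 s)) ξ = s ξ := by rw [h]
    rw [SchwartzMap.fourierInv_coe, SchwartzMap.fourier_coe, Real.fourierInv_eq] at h2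
    exact h2

open FourierTransform Real in
lemma local0 {f K : V → ℂ} (hf : Measurable f) {C : ℝ} (hC : ∀ x, ‖f x‖ ≤ C)
    (hK : Integrable K) 
    (ann : ∀ x, ∫ y, f (x + y) * K y = 0) (hK0 : ∫ y, K y ≠ 0) :
    ∃ r > 0, ∀ ψ : V → ℂ, Integrable ψ → Integrable (𝓕 ψ) → (∀ ξ, ψ ξ ≠ 0 → ‖ξ‖ < r) →
      ∫ y, f y * 𝓕 ψ y = 0 := by
  obtain ⟨w, χ, -, -, h1, hw, -, hχ⟩ := exists_bump V
  have ht := om_tendsto K w hK hw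
  have ht' := (ht.mono_left (nhdsWithin_le_nhds (s := Ioi 0))).eventually_lt_const
    (norm_pos_iff.2 hK0)
  obtain ⟨ε, hs, hε⟩ := (ht'.and self_mem_nhdsWithin).exists
  have hε : 0 < ε := hε
  refine ⟨ε, hε, fun ψ i1 i2 hsupp => ?_⟩
  apply core hf hC hK (sc_integrable hε hw) i2 ann
  · intro u
    apply repro i1 (sc_integrable hε hw)
    intro ξ hξ
    rw [sc_fourier hε, hχ, h1]
    rw [norm_smul, norm_inv, Real.norm_of_nonneg hε.le, inv_mul_le_iff₀ hε, mul_one]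
    exact (hsupp ξ hξ).le
  · simpa only [sc_om hε] using hs

open FourierTransform Real in
lemma local1 {f K : V → ℂ} (hf : Measurable f) {C : ℝ} (hC : ∀ x, ‖f x‖ ≤ C)
    (hK : Integrable K) 
    (ann : ∀ x, ∫ y, f (x + y) * K y = 0) (η : V) (hK0 : ∫ y, (𝐞 (inner ℝ y η) : ℂ) * K y ≠ 0) :
    ∃ r > 0, ∀ ψ : V → ℂ, Integrable ψ → Integrable (𝓕 ψ) → (∀ ξ, ψ ξ ≠ 0 → ‖ξ - η‖ < r) →
      ∫ y, f y * 𝓕 ψ y = 0 := by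
  have cc : Continuous fun x : V => (𝐞 (inner ℝ x η) : ℂ) := 
    continuous_subtype_val.comp (Real.continuous_fourierChar.comp (by fun_prop))
  have cc' : Continuous fun x : V => (𝐞 (-inner ℝ x η) : ℂ) := 
    continuous_subtype_val.comp (Real.continuous_fourierChar.comp (by fun_prop))
  have e0 : ∀ y : V, (𝐞 (-inner ℝ y η) : ℂ) * (𝐞 (inner ℝ y η) : ℂ) = 1 := by
    intro y
    rw [← Circle.coe_mul, ← AddChar.map_add_eq_mul]; simp
  obtain ⟨r, hr, H⟩ := local0 (f := fun x => (𝐞 (-inner ℝ x η) : ℂ) * f x) (C := C)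
    (K := fun y => (𝐞 (inner ℝ y η) : ℂ) * K y)
    (cc'.measurable.mul hf) (fun x => by rw [norm_mul, Circle.norm_coe, one_mul]; exact hC x)
    (hK.bdd_mul (c := 1) cc.aestronglyMeasurable (Eventually.of_forall fun p => (Circle.norm_coe _).le))
    (fun x => by
      rw [← mul_zero (𝐞 (-inner ℝ x η) : ℂ), ← ann x, ← integral_const_mul]
      congr 1; ext y
      rw [inner_add_left, neg_add, AddChar.map_add_eq_mul, Circle.coe_mul]
      linear_combination (𝐞 (-inner ℝ x η) : ℂ) * f (x + y) * K y * e0 y) hK0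
  refine ⟨r, hr, fun ψ i1 i2 hs => ?_⟩
  have e1 : 𝓕 (fun ξ => ψ (ξ + η)) = fun u => (𝐞 (inner ℝ u η) : ℂ) * 𝓕 ψ u := by
    ext u
    rw [Real.fourier_eq, Real.fourier_eq, ← integral_sub_right_eq_self _ η, ← integral_const_mul]
    congr 1; ext ξ
    rw [sub_add_cancel, Circle.smul_def, Circle.smul_def, smul_eq_mul, smul_eq_mul,
      inner_sub_left, neg_sub, sub_eq_add_neg, AddChar.map_add_eq_mul, Circle.coe_mul,
      real_inner_comm u η, mul_assoc]
  have := H (fun ξ => ψ (ξ + η)) (i1.comp_add_right η) (by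
    rw [e1]; exact i2.bdd_mul (c := 1) cc.aestronglyMeasurable (Eventually.of_forall fun p => (Circle.norm_coe _).le))
    (fun ξ h => by simpa using hs _ h)
  rw [e1] at this
  rw [← this]
  congr 1; ext y
  linear_combination -f y * 𝓕 ψ y * e0 y

open FourierTransform Real ContDiff in
lemma global {f K : V → ℂ} (hf : Measurable f) {C : ℝ} (hC : ∀ x, ‖f x‖ ≤ C)
    (hK : Integrable K) 
    (ann : ∀ x, ∫ y, f (x + y) * K y = 0) (hK0 : ∀ η : V, ∫ y, (𝐞 (inner ℝ y η) : ℂ) * K y ≠ 0) 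
    (ψ : V → ℂ) (h1 : ContDiff ℝ ∞ ψ) (h2 : HasCompactSupport ψ) :
    ∫ y, f y * 𝓕 ψ y = 0 := by
  choose r hr H using fun η => local1 hf hC hK ann η (hK0 η)
  obtain ⟨ρ, hρ⟩ := SmoothPartitionOfUnity.exists_isSubordinate (modelWithCornersSelf ℝ V)
    (isClosed_tsupport ψ) (fun η : V => Metric.ball η (r η)) (fun η => Metric.isOpen_ball)
    (fun x _ => mem_iUnion.2 ⟨x, Metric.mem_ball_self (hr x)⟩)
  have hfin : {i | ((Function.support (ρ i)) ∩ tsupport ψ).Nonempty}.Finite :=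
    ρ.locallyFinite.finite_nonempty_inter_compact h2
  let P : V → V → ℂ := fun i ξ => (ρ i ξ : ℂ) * ψ ξ
  have hP1 : ∀ i, ContDiff ℝ ∞ (P i) := fun i =>
    (Complex.ofRealCLM.contDiff.comp (ρ i).contMDiff.contDiff).mul h1
  have hP2 : ∀ i, HasCompactSupport (P i) := fun i => h2.mul_left
  let S : V → SchwartzMap V ℂ := fun i => (hP2 i).toSchwartzMap (hP1 i)
  have hsum : h2.toSchwartzMap h1 = ∑ i ∈ hfin.toFinset, S i := by
    ext ξ
    rw [_root_.sum_apply]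
    show ψ ξ = ∑ i ∈ hfin.toFinset, (ρ i ξ : ℂ) * ψ ξ
    by_cases h0 : ψ ξ = 0
    · simp [h0]
    have hm : ξ ∈ tsupport ψ := subset_tsupport _ h0
    have := ρ.sum_eq_one hm
    rw [finsum_eq_sum_of_support_subset (s := hfin.toFinset)] at this
    · rw [← Finset.sum_mul, ← Complex.ofReal_sum, this]; simp
    · intro i hi
      simp only [Finite.coe_toFinset]
      exact ⟨ξ, hi, hm⟩
  have e : 𝓕 ψ = 𝓕 (h2.toSchwartzMap h1) := rfl
  rw [e, hsum]
  have e2 : 𝓕 (∑ i ∈ hfin.toFinset, S i) = ∑ i ∈ hfin.toFinset, 𝓕 (S i) := by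
    exact map_sum (FourierTransform.fourierCLM ℂ (SchwartzMap V ℂ)) _ _
  rw [e2]
  simp only [_root_.sum_apply, Finset.mul_sum]
  rw [integral_finsetSum _ fun i _ => bddint hf hC (𝓕 (S i)).integrable]
  apply Finset.sum_eq_zero
  intro i _
  apply H i (P i) (S i).integrable (𝓕 (S i)).integrable
  intro ξ hξ
  have : ρ i ξ ≠ 0 := by
    intro h; apply hξ; simp [P, h]
  have := hρ i (subset_tsupport _ this)
  simpa [dist_eq_norm] using this

open FourierTransform Real ContDiff in
theorem wiener {f K : V → ℂ} (hf : Measurable f) {C : ℝ} (hC : ∀ x, ‖f x‖ ≤ C)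
    (hK : Integrable K) 
    (ann : ∀ x, ∫ y, f (x + y) * K y = 0) (hK0 : ∀ η : V, ∫ y, (𝐞 (inner ℝ y η) : ℂ) * K y ≠ 0) :
    ∀ᵐ x, f x = 0 := by
  obtain ⟨w, χ, c1, c2, h1, hw, hwχ, hχ⟩ := exists_bump V
  have hw1 : ∫ y, w y = 1 := by
    have := hχ 0
    rw [h1 0 (by simp)] at this
    simpa using this
  have wann : ∀ R > 0, ∀ x, ∫ y, f (x + y) * sc R w y = 0 := by
    intro R hR x
    have e : sc R w = 𝓕 (fun ξ => χ (R⁻¹ • ξ)) := by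
      ext y
      rw [sc, hwχ, Real.fourier_eq, Real.fourier_eq, ← integral_smul, ← sc_int (inv_pos.2 hR)]
      congr 1; ext ξ
      rw [smul_smul, ← mul_pow, inv_mul_cancel₀ hR.ne', one_pow, one_smul]
      congr 3
      rw [real_inner_smul_left, real_inner_smul_right, ← mul_assoc, inv_mul_cancel₀ hR.ne', one_mul]
    rw [e]
    apply global (f := fun y => f (x + y)) (hf.comp (by fun_prop)) (fun y => hC _) hK
      (fun z => by simpa only [add_assoc] using ann (x + z)) hK0
    · exact c1.comp (contDiff_const_smul _)
    · exact c2.comp_homeomorph (Homeomorph.smulOfNeZero R⁻¹ (inv_ne_zero hR.ne'))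
  have fl : LocallyIntegrable f := by
    intro x
    refine ⟨Metric.ball x 1, Metric.ball_mem_nhds _ one_pos, ?_⟩
    apply Measure.integrableOn_of_bounded (M := C) measure_ball_lt_top.ne hf.aestronglyMeasurable
    exact Eventually.of_forall hC
  apply ae_eq_zero_of_integral_contDiff_smul_eq_zero fl
  intro g g1 g2
  have gi : Integrable fun x => (g x : ℂ) := (g1.continuous.integrable_of_hasCompactSupport g2).ofReal
  have e : ∫ x, g x • f x = ∫ x, f x * (g x : ℂ) := by
    congr 1; ext x; rw [Complex.real_smul, mul_comm]
  rw [e, ← norm_le_zero_iff]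
  have ht := ((om_tendsto w (fun x => (g x : ℂ)) hw gi).comp tendsto_inv_atTop_zero).const_mul C
  rw [mul_zero] at ht
  refine ge_of_tendsto ht ?_
  filter_upwards [eventually_gt_atTop 0] with R hR
  have := est hf hC (sc_integrable hR hw) gi (wann R hR)
  have e3 : ∫ y, sc R w y = 1 := by
    rw [← hw1]; exact sc_int hR w
  rw [e3, sc_norm hR] at this
  simpa using this

end WT

namespace WT
open Filter Topology

open Real FourierTransform in
theorem wiener_pi {n : ℕ} {g Kr : (Fin n → ℝ) → ℝ} (hg : AEStronglyMeasurable g volume) {C : ℝ}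
    (hC : ∀ᵐ u, |g u| ≤ C) (hK : Integrable Kr) (ann : ∀ v, ∫ u, Kr (u + v) * g u = 0)
    (hK0 : ∀ ξ : Fin n → ℝ, ∫ u, cexp (I * ∑ i, (ξ i : ℂ) * u i) * Kr u ≠ 0) :
    ∀ᵐ u, g u = 0 := by
  set g1 := hg.mk g with hg1
  have m1 : Measurable g1 := hg.stronglyMeasurable_mk.measurable
  have a1 : g =ᵐ[volume] g1 := hg.ae_eq_mk
  set g2 : (Fin n → ℝ) → ℝ := fun u => if |g1 u| ≤ C then g1 u else 0 with hg2
  have m2 : Measurable g2 := Measurable.ite (measurableSet_le m1.abs measurable_const) m1 measurable_const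
  have a2 : g =ᵐ[volume] g2 := by
    filter_upwards [a1, hC] with u h1 h2
    rw [hg2]; simp only [← h1, h2, if_true]
  have b2 : ∀ u, |g2 u| ≤ max C 0 := by
    intro u; simp only [hg2]; split_ifs with h
    · exact h.trans (le_max_left _ _)
    · simp
  have mp : MeasurePreserving (MeasurableEquiv.toLp 2 (Fin n → ℝ)).symm := EuclideanSpace.volume_preserving_symm_measurableEquiv_toLp _
  have key := wiener (V := EuclideanSpace ℝ (Fin n)) (f := fun x => (g2 ((MeasurableEquiv.toLp 2 (Fin n → ℝ)).symm x) : ℂ))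
    (K := fun x => (Kr ((MeasurableEquiv.toLp 2 (Fin n → ℝ)).symm x) : ℂ)) (C := max C 0)
    (measurable_ofReal.comp (m2.comp (MeasurableEquiv.measurable _)))
    (fun x => by rw [Complex.norm_real]; exact b2 _)
    (mp.integrable_comp_of_integrable hK).ofReal
    (by
      intro x
      have e := mp.integral_comp (MeasurableEquiv.measurableEmbedding _)
        (fun y => ((g2 ((MeasurableEquiv.toLp 2 (Fin n → ℝ)).symm x + y) * Kr y : ℝ) : ℂ))
      simp only [Complex.ofReal_mul] at e
      refine e.trans ?_
      simp only [← Complex.ofReal_mul]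
      rw [integral_complex_ofReal, Complex.ofReal_eq_zero]
      have := ann (-((MeasurableEquiv.toLp 2 (Fin n → ℝ)).symm x))
      rw [← this, ← integral_sub_right_eq_self _ ((MeasurableEquiv.toLp 2 (Fin n → ℝ)).symm x)]
      apply integral_congr_ae
      filter_upwards [a2] with u hu
      rw [add_sub_cancel, hu, mul_comm, sub_eq_add_neg])
    (by
      intro η
      have e := mp.integral_comp (MeasurableEquiv.measurableEmbedding _)
        (fun y => cexp (I * ∑ i, ((2 * π * η i : ℝ) : ℂ) * y i) * Kr y)
      have h := hK0 (fun i => 2 * π * η i)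
      rw [← e] at h
      intro hz
      refine h (Eq.trans ?_ hz)
      refine integral_congr_ae (Eventually.of_forall fun y => ?_)
      beta_reduce
      congr 1
      rw [Real.fourierChar_apply]
      congr 1
      simp only [PiLp.inner_apply, RCLike.inner_apply, conj_trivial]
      push_cast
      rw [Finset.mul_sum, Finset.mul_sum, Finset.sum_mul]
      apply Finset.sum_congr rfl
      intro i _
      simp only [MeasurableEquiv.coe_toLp_symm]
      ring)
  have k2 : ∀ᵐ u, (g2 u : ℂ) = 0 := by
    rw [← mp.map_eq]
    exact ((MeasurableEquiv.measurableEmbedding _).ae_map_iff).2 key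
  filter_upwards [a2, k2] with u h1 h2
  rw [h1]; exact_mod_cast h2

def Ev {n : ℕ} (u : Fin n → ℝ) : Fin n → ℝ := fun i => Real.exp (u i)

lemma Ev_mem {n : ℕ} (u : Fin n → ℝ) : Ev u ∈ posOrth n := fun _ => Real.exp_pos _

lemma Ev_log {n : ℕ} {x : Fin n → ℝ} (hx : x ∈ posOrth n) : Ev (fun i => Real.log (x i)) = x := by
  ext i; exact Real.exp_log (hx i)

lemma Ev_cont {n : ℕ} : Continuous (Ev (n := n)) := by unfold Ev; fun_prop

lemma Ev_inj {n : ℕ} : Function.Injective (Ev (n := n)) := by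
  intro u v h; ext i; exact Real.exp_injective (congrFun h i)

lemma Ev_emb {n : ℕ} : MeasurableEmbedding (Ev (n := n)) :=
  Ev_cont.measurableEmbedding Ev_inj

lemma Ev_image {n : ℕ} : Ev (n := n) '' univ = posOrth n := by
  ext x; constructor
  · rintro ⟨u, -, rfl⟩; exact Ev_mem u
  · intro hx; exact ⟨_, trivial, Ev_log hx⟩

lemma posOrth_open {n : ℕ} : IsOpen (posOrth n) := by
  have : posOrth n = ⋂ i, {x | 0 < x i} := by ext; simp [posOrth]
  rw [this]
  exact isOpen_iInter_of_finite fun i => isOpen_lt continuous_const (continuous_apply i)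

def Ev' {n : ℕ} (u : Fin n → ℝ) : (Fin n → ℝ) →L[ℝ] (Fin n → ℝ) :=
  ContinuousLinearMap.pi fun i => Real.exp (u i) • ContinuousLinearMap.proj i

lemma Ev'_det {n : ℕ} (u : Fin n → ℝ) : |(Ev' u).det| = ∏ i, Real.exp (u i) := by
  have : ((Ev' u : (Fin n → ℝ) →L[ℝ] (Fin n → ℝ)) : (Fin n → ℝ) →ₗ[ℝ] (Fin n → ℝ)) =
      Matrix.toLin' (Matrix.diagonal fun i => Real.exp (u i)) := by
    ext v i
    simp [Ev', Matrix.mulVec_diagonal]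
  rw [ContinuousLinearMap.det, this, LinearMap.det_toLin', Matrix.det_diagonal,
    abs_of_pos (Finset.prod_pos fun i _ => Real.exp_pos _)]

lemma Ev_deriv {n : ℕ} (u : Fin n → ℝ) : HasFDerivAt Ev (Ev' u) u := by
  rw [hasFDerivAt_pi']
  intro i
  have := (hasFDerivAt_apply (𝕜 := ℝ) i u).exp
  exact this

lemma map_Ev {n : ℕ} : ((volume : Measure (Fin n → ℝ)).withDensity
    fun u => ENNReal.ofReal (∏ i, Real.exp (u i))).map Ev = volume.restrict (posOrth n) := by
  have := map_withDensity_abs_det_fderiv_eq_addHaar (volume : Measure (Fin n → ℝ)) (s := univ) (f := Ev)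
    (f' := Ev') nullMeasurableSet_univ (fun x _ => (Ev_deriv x).hasFDerivWithinAt) Ev_inj.injOn
  simpa only [Measure.restrict_univ, Ev'_det, Ev_image] using this

lemma int_Ev {n : ℕ} {E : Type*} [NormedAddCommGroup E] [NormedSpace ℝ E] (G : (Fin n → ℝ) → E) :
    ∫ x in posOrth n, G x = ∫ u, (∏ i, Real.exp (u i)) • G (Ev u) := by
  have := integral_image_eq_integral_abs_det_fderiv_smul (volume : Measure (Fin n → ℝ)) (s := univ) (f := Ev)
    (f' := Ev') MeasurableSet.univ (fun x _ => (Ev_deriv x).hasFDerivWithinAt) Ev_inj.injOn G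
  simpa only [Measure.restrict_univ, Ev'_det, Ev_image] using this

lemma qmp_Ev {n : ℕ} : Measure.QuasiMeasurePreserving (Ev (n := n)) volume (volume.restrict (posOrth n)) := by
  refine ⟨Ev_cont.measurable, ?_⟩
  rw [← map_Ev]
  apply Measure.AbsolutelyContinuous.map _ Ev_cont.measurable
  apply withDensity_absolutelyContinuous'
  · exact Measurable.aemeasurable (by fun_prop)
  · refine Eventually.of_forall fun u => ?_
    simpa using (Finset.prod_pos fun i _ => Real.exp_pos (u i))

lemma ae_of_Ev {n : ℕ} {P : (Fin n → ℝ) → Prop} (h : ∀ᵐ u, P (Ev u)) :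
    ∀ᵐ x ∂(volume.restrict (posOrth n)), P x := by
  rw [← map_Ev, Ev_emb.ae_map_iff]
  exact (withDensity_absolutelyContinuous _ _).ae_le h

lemma exp_image : Real.exp '' univ = Ioi 0 := by
  rw [image_univ, Real.range_exp]

lemma int_exp (G : ℝ → ℂ) : ∫ t in Ioi (0:ℝ), G t = ∫ τ, Real.exp τ • G (Real.exp τ) := by
  have := integral_image_eq_integral_abs_deriv_smul (s := univ) (f := Real.exp) (f' := Real.exp)
    MeasurableSet.univ (fun x _ => (Real.hasDerivAt_exp x).hasDerivWithinAt) Real.exp_injective.injOn G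
  simpa only [Measure.restrict_univ, abs_of_pos (Real.exp_pos _), exp_image] using this

lemma intble_exp {E : Type*} [NormedAddCommGroup E] [NormedSpace ℝ E] (G : ℝ → E) :
    IntegrableOn G (Ioi (0:ℝ)) ↔ Integrable fun τ => Real.exp τ • G (Real.exp τ) := by
  have := integrableOn_image_iff_integrableOn_abs_deriv_smul (s := univ) (f := Real.exp) (f' := Real.exp)
    MeasurableSet.univ (fun x _ => (Real.hasDerivAt_exp x).hasDerivWithinAt) Real.exp_injective.injOn G
  simpa only [integrableOn_univ, abs_of_pos (Real.exp_pos _), exp_image] using this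

lemma cpow_exp (x : ℝ) (z : ℂ) : ((Real.exp x : ℝ) : ℂ) ^ z = cexp (z * x) := by
  rw [Complex.cpow_def_of_ne_zero (by exact_mod_cast (Real.exp_pos x).ne'), ← Complex.ofReal_log (Real.exp_pos x).le,
    Real.log_exp, mul_comm]

lemma mellin_exp (h : ℝ → ℂ) (s : ℂ) : mellin h s = ∫ τ : ℝ, h (Real.exp τ) * cexp (s * τ) := by
  rw [mellin, int_exp]
  congr 1; ext τ
  rw [cpow_exp, Complex.real_smul, smul_eq_mul, Complex.ofReal_exp, ← mul_assoc, ← Complex.exp_add, mul_comm]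
  congr 2; ring

end WT

namespace WT
open Filter Topology

lemma mp_Psi {n : ℕ} (Q : (Fin n → ℝ) → ℝ) (hQ : Measurable Q)
    (hQt : ∀ u t, Q (fun i => u i + t) = Q u + t) :
    MeasurePreserving (fun p : (Fin n → ℝ) × ℝ => ((fun i => p.1 i + (p.2 - Q p.1) : Fin n → ℝ), Q p.1))
      (volume.prod volume) (volume.prod volume) := by
  have S1 : MeasurePreserving (fun p : (Fin n → ℝ) × ℝ => (p.1, p.2 - Q p.1))
      (volume.prod volume) (volume.prod volume) :=
    (MeasurePreserving.id _).skew_product (g := fun u τ => τ - Q u)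
      (measurable_snd.sub (hQ.comp measurable_fst))
      (Eventually.of_forall fun u => (measurePreserving_sub_right volume (Q u)).map_eq)
  have S2 : MeasurePreserving (fun p : ℝ × (Fin n → ℝ) => (p.1, (fun i => p.2 i + p.1 : Fin n → ℝ)))
      (volume.prod volume) (volume.prod volume) :=
    (MeasurePreserving.id _).skew_product (g := fun (t : ℝ) (u : Fin n → ℝ) => (fun i => u i + t : Fin n → ℝ))
      (by unfold Function.uncurry; fun_prop)
      (Eventually.of_forall fun t => (measurePreserving_add_right volume (fun _ => t : Fin n → ℝ)).map_eq)
  have S3 : MeasurePreserving (fun p : (Fin n → ℝ) × ℝ => (p.1, Q p.1 - p.2))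
      (volume.prod volume) (volume.prod volume) :=
    (MeasurePreserving.id _).skew_product (g := fun u τ => Q u - τ)
      ((hQ.comp measurable_fst).sub measurable_snd)
      (Eventually.of_forall fun u => (Measure.measurePreserving_sub_left volume (Q u)).map_eq)
  have := S3.comp ((Measure.measurePreserving_swap).comp (S2.comp ((Measure.measurePreserving_swap).comp S1)))
  convert this using 1
  ext p i
  · rfl
  · simp [Function.comp, Prod.swap, hQt]

lemma polar {n : ℕ} (Q : (Fin n → ℝ) → ℝ) (hQ : Measurable Q)
    (hQt : ∀ u t, Q (fun i => u i + t) = Q u + t) (z : Fin n → ℂ) (s : ℂ) (hs : s = ∑ i, z i)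
    (G H : ℝ → ℂ) (hG0 : ∀ τ, G τ ≠ 0)
    (hG : Integrable fun u : Fin n → ℝ => cexp (∑ i, z i * u i) * G (Q u))
    (hH : Integrable fun τ : ℝ => H τ * cexp (s * τ)) :
    Integrable (fun u : Fin n → ℝ => cexp (∑ i, z i * u i) * H (Q u)) ∧
    (∫ u : Fin n → ℝ, cexp (∑ i, z i * u i) * H (Q u)) * (∫ τ : ℝ, G τ * cexp (s * τ)) =
    (∫ u : Fin n → ℝ, cexp (∑ i, z i * u i) * G (Q u)) * (∫ τ : ℝ, H τ * cexp (s * τ)) := by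
  have mp := mp_Psi Q hQ hQt
  have me : MeasurableEmbedding (fun p : (Fin n → ℝ) × ℝ => ((fun i => p.1 i + (p.2 - Q p.1) : Fin n → ℝ), Q p.1)) := by
    apply MeasurableEmbedding.of_measurable_inverse (g := (fun p : (Fin n → ℝ) × ℝ => ((fun i => p.1 i + (p.2 - Q p.1) : Fin n → ℝ), Q p.1))) mp.measurable _ mp.measurable
    · intro p
      ext i
      · simp [hQt]; ring
      · simp [hQt]
    · have : Function.Surjective (fun p : (Fin n → ℝ) × ℝ => ((fun i => p.1 i + (p.2 - Q p.1) : Fin n → ℝ), Q p.1)) := by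
        intro p
        refine ⟨((fun i => p.1 i + (p.2 - Q p.1) : Fin n → ℝ), Q p.1), ?_⟩
        ext i
        · simp [hQt]; ring
        · simp [hQt]
      rw [this.range_eq]; exact MeasurableSet.univ
  have hprod := hG.mul_prod hH
  have e : ∀ p : (Fin n → ℝ) × ℝ,
      cexp (∑ i, z i * ((p.1 i + (p.2 - Q p.1) : ℝ) : ℂ)) * G (Q (fun i => p.1 i + (p.2 - Q p.1))) *
        (H (Q p.1) * cexp (s * (Q p.1 : ℝ))) =
      (cexp (∑ i, z i * p.1 i) * H (Q p.1)) * (G p.2 * cexp (s * p.2)) := by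
    intro p
    rw [hQt, add_sub_cancel]
    have : (∑ i, z i * ((p.1 i + (p.2 - Q p.1) : ℝ) : ℂ)) + s * (Q p.1 : ℝ) = (∑ i, z i * p.1 i) + s * p.2 := by
      push_cast
      simp only [mul_add, Finset.sum_add_distrib, ← Finset.sum_mul, ← hs]
      ring
    have h2 : cexp (∑ i, z i * ((p.1 i + (p.2 - Q p.1) : ℝ) : ℂ)) * cexp (s * (Q p.1 : ℝ)) = cexp (∑ i, z i * p.1 i) * cexp (s * p.2) := by
      rw [← Complex.exp_add, this, Complex.exp_add]
    linear_combination G p.2 * H (Q p.1) * h2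
  have h2 := (mp.integrable_comp_emb me).2 hprod
  have h3 : Integrable (fun p : (Fin n → ℝ) × ℝ => (cexp (∑ i, z i * p.1 i) * H (Q p.1)) * (G p.2 * cexp (s * p.2)))
      (volume.prod volume) := by
    refine h2.congr (Eventually.of_forall fun p => ?_)
    exact e p
  constructor
  · obtain ⟨τ, hτ⟩ := h3.prod_left_ae.exists
    have hne : G τ * cexp (s * τ) ≠ 0 := mul_ne_zero (hG0 τ) (Complex.exp_ne_zero _)
    refine (hτ.mul_const (G τ * cexp (s * τ))⁻¹).congr (Eventually.of_forall fun u => ?_)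
    simp only
    rw [mul_assoc _ (G τ * _), mul_inv_cancel₀ hne, mul_one]
  · have i := mp.integral_comp me (fun p : (Fin n → ℝ) × ℝ => (cexp (∑ i, z i * p.1 i) * G (Q p.1)) * (H p.2 * cexp (s * p.2)))
    rw [integral_prod_mul (fun u : Fin n → ℝ => cexp (∑ i, z i * u i) * G (Q u)) (fun τ : ℝ => H τ * cexp (s * τ))] at i
    rw [← i, ← integral_prod_mul (fun u : Fin n → ℝ => cexp (∑ i, z i * u i) * H (Q u)) (fun τ : ℝ => G τ * cexp (s * τ))]
    congr 1; ext p
    exact (e p).symm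

section cost
variable {n : ℕ} {q : (Fin n → ℝ) → ℝ}

lemma q_bound (hn : 2 ≤ n) (hq : IsCostFun n q) : ∃ δ > 0, ∀ x ∈ posOrth n, δ * ∑ i, x i ≤ q x := by
  obtain ⟨-, hpos, hhom, hbd⟩ := hq
  obtain ⟨B, hB⟩ := (hbd 1).exists_norm_le
  have n0 : (0:ℝ) < n := by exact_mod_cast (by omega : 0 < n)
  refine ⟨(n * (max B 1))⁻¹, by positivity, fun x hx => ?_⟩
  have hqx := hpos x hx
  have h1 : ‖fun i => (q x)⁻¹ * x i‖ ≤ B := by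
    apply hB
    refine ⟨fun i => mul_pos (inv_pos.2 hqx) (hx i), ?_⟩
    rw [hhom _ (inv_pos.2 hqx) x hx, inv_mul_cancel₀ hqx.ne']
  rw [inv_mul_le_iff₀ (by positivity)]
  have : ∀ i ∈ Finset.univ, x i ≤ max B 1 * q x := by
    intro i _
    have h2 := (norm_le_pi_norm _ i).trans h1
    rw [Real.norm_eq_abs] at h2
    have h3 := ((le_abs_self _).trans h2).trans (le_max_left B 1)
    rwa [inv_mul_le_iff₀ hqx, mul_comm] at h3
  refine (Finset.sum_le_sum this).trans ?_
  simp [mul_assoc]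

def Qf (q : (Fin n → ℝ) → ℝ) (u : Fin n → ℝ) : ℝ := Real.log (q (Ev u))

lemma exp_Qf (hq : IsCostFun n q) (u : Fin n → ℝ) : Real.exp (Qf q u) = q (Ev u) :=
  Real.exp_log (hq.2.1 _ (Ev_mem u))

lemma qEv_cont (hq : IsCostFun n q) : Continuous fun u => q (Ev u) :=
  hq.1.continuousOn.comp_continuous Ev_cont Ev_mem

lemma Qf_cont (hq : IsCostFun n q) : Continuous (Qf q) :=
  (qEv_cont hq).log fun u => (hq.2.1 _ (Ev_mem u)).ne'

lemma Qf_add (hq : IsCostFun n q) (u : Fin n → ℝ) (t : ℝ) :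
    Qf q (fun i => u i + t) = Qf q u + t := by
  unfold Qf
  have : Ev (fun i => u i + t) = fun i => Real.exp t * Ev u i := by
    ext i; simp only [Ev]; rw [Real.exp_add, mul_comm]
  rw [this, hq.2.2.1 _ (Real.exp_pos t) _ (Ev_mem u),
    Real.log_mul (Real.exp_pos t).ne' (hq.2.1 _ (Ev_mem u)).ne', Real.log_exp, add_comm]

lemma gammaInt {a : ℝ} (ha : 0 < a) {δ : ℝ} (hδ : 0 < δ) :
    Integrable fun τ : ℝ => Real.exp (a * τ) * Real.exp (-(δ * Real.exp τ)) := by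
  have h1 : IntegrableOn (fun t : ℝ => t ^ (a - 1) * Real.exp (-(δ * t))) (Ioi 0) := by
    have := integrableOn_rpow_mul_exp_neg_mul_rpow (s := a - 1) (p := 1) (b := δ) (by linarith) one_pos hδ
    simpa using this
  rw [intble_exp] at h1
  refine h1.congr (Eventually.of_forall fun τ => ?_)
  simp only [smul_eq_mul]
  rw [← mul_assoc, ← Real.exp_mul, ← Real.exp_add]
  congr 2; ring

lemma norm_cexp_sum (c ξ : Fin n → ℝ) (u : Fin n → ℝ) :
    ‖cexp (∑ i, ((c i : ℂ) + I * ξ i) * u i)‖ = Real.exp (∑ i, c i * u i) := by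
  rw [Complex.norm_exp]
  congr 1
  rw [Complex.re_sum]
  apply Finset.sum_congr rfl
  intro i _
  simp

lemma expq_int (hn : 2 ≤ n) (hq : IsCostFun n q) (c ξ : Fin n → ℝ) (hc : ∀ i, 0 < c i) :
    Integrable fun u : Fin n → ℝ => cexp (∑ i, ((c i : ℂ) + I * ξ i) * u i) * cexp (-(Real.exp (Qf q u) : ℝ)) := by
  obtain ⟨δ, hδ, hb⟩ := q_bound hn hq
  have h1 : Integrable fun u : Fin n → ℝ => ∏ i, (Real.exp (c i * u i) * Real.exp (-(δ * Real.exp (u i)))) :=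
    Integrable.fintype_prod (f := fun i t => Real.exp (c i * t) * Real.exp (-(δ * Real.exp t)))
      fun i => gammaInt (hc i) hδ
  refine h1.mono' ?_ (Eventually.of_forall fun u => ?_)
  · apply Continuous.aestronglyMeasurable
    have := Qf_cont hq
    fun_prop
  · rw [norm_mul, norm_cexp_sum, Finset.prod_mul_distrib, ← Real.exp_sum, ← Real.exp_sum]
    gcongr
    rw [exp_Qf hq, ← Complex.ofReal_neg, Complex.norm_exp_ofReal]
    gcongr
    rw [Finset.sum_neg_distrib, neg_le_neg_iff, ← Finset.mul_sum]
    exact hb _ (Ev_mem u)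

lemma mellinT_eq (g : (Fin n → ℝ) → ℝ) (z : Fin n → ℂ) :
    mellinT n g z = ∫ u : Fin n → ℝ, cexp (∑ i, z i * u i) * g (Ev u) := by
  rw [mellinT, int_Ev]
  congr 1; ext u
  rw [Complex.real_smul, ← mul_assoc, Complex.ofReal_prod, ← Finset.prod_mul_distrib, Complex.exp_sum]
  congr 1
  apply Finset.prod_congr rfl
  intro i _
  rw [Ev, cpow_exp, Complex.ofReal_exp, ← Complex.exp_add]
  congr 1; ring

end cost

/-- the kernel in logarithmic coordinates -/
def Kr {n : ℕ} (q : (Fin n → ℝ) → ℝ) (h : ℝ → ℝ) (c : Fin n → ℝ) (u : Fin n → ℝ) : ℝ :=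
  Real.exp (∑ i, c i * u i) * h (q (Ev u))

lemma Rhq_Ev {n : ℕ} (q : (Fin n → ℝ) → ℝ) (h : ℝ → ℝ) (c : Fin n → ℝ) (f : (Fin n → ℝ) → ℝ)
    (v : Fin n → ℝ) : Rhq n q h f (Ev v) =
      Real.exp (-∑ i, c i * v i) * ∫ u, Kr q h c (u + v) * (f (Ev u) * Real.exp (∑ i, (1 - c i) * u i)) := by
  rw [Rhq, int_Ev, ← integral_const_mul]
  congr 1; ext u
  have : (fun i => Ev v i * Ev u i) = Ev (u + v) := by
    ext i; simp only [Ev, Pi.add_apply]; rw [Real.exp_add, mul_comm]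
  rw [this, Kr, ← Real.exp_sum, smul_eq_mul]
  have h2 : Real.exp (∑ i, u i) = Real.exp (-∑ i, c i * v i) * Real.exp (∑ i, c i * (u + v) i) * Real.exp (∑ i, (1 - c i) * u i) := by
    rw [← Real.exp_add, ← Real.exp_add]
    congr 1
    simp only [Pi.add_apply, mul_add, sub_mul, one_mul, Finset.sum_add_distrib, Finset.sum_sub_distrib]
    ring
  rw [h2]; ring

lemma rpow_Ev {n : ℕ} (c u : Fin n → ℝ) : ∏ i, Ev u i ^ c i = Real.exp (∑ i, c i * u i) := by
  rw [Real.exp_sum]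
  apply Finset.prod_congr rfl
  intro i _
  rw [Ev, ← Real.exp_mul, mul_comm]

lemma H_int {α : ℝ} {h : ℝ → ℝ} (hh : MemL1w1 α h) (τ' : ℝ) :
    Integrable fun τ : ℝ => (h (Real.exp τ) : ℂ) * cexp (((α : ℂ) + I * τ') * τ) := by
  rw [MemL1w1, intble_exp] at hh
  have h1 : Integrable fun τ : ℝ => h (Real.exp τ) * Real.exp (α * τ) := by
    refine hh.congr (Eventually.of_forall fun τ => ?_)
    simp only [smul_eq_mul]
    rw [← Real.exp_mul, mul_left_comm, ← Real.exp_add]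
    congr 2; ring
  have h2 : Integrable fun τ : ℝ => ((h (Real.exp τ) * Real.exp (α * τ) : ℝ) : ℂ) := h1.ofReal (𝕜 := ℂ)
  have h3 := h2.bdd_mul (c := 1) (f := fun τ : ℝ => cexp ((τ' * τ : ℝ) * I))
    (Continuous.aestronglyMeasurable (by fun_prop))
    (Eventually.of_forall fun τ => (Complex.norm_exp_ofReal_mul_I _).le)
  refine h3.congr (Eventually.of_forall fun τ => ?_)
  simp only
  push_cast
  rw [mul_left_comm, ← Complex.exp_add]
  congr 2; push_cast; ring

lemma main_id {n : ℕ} (hn : 2 ≤ n) {q : (Fin n → ℝ) → ℝ} (hq : IsCostFun n q)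
    (c : Fin n → ℝ) (hc : ∀ i, 0 < c i) (α : ℝ) (hα : α = ∑ i, c i)
    (h : ℝ → ℝ) (hh : MemL1w1 α h) (ξ : Fin n → ℝ) :
    Integrable (fun u : Fin n → ℝ => cexp (∑ i, ((c i : ℂ) + I * ξ i) * u i) * h (q (Ev u))) ∧
    ∃ γ : ℂ, γ ≠ 0 ∧ 
    (∫ u, cexp (I * ∑ i, (ξ i : ℂ) * u i) * Kr q h c u) * γ =
      mellinT n (fun x => Real.exp (-q x)) (fun i => (c i : ℂ) + I * (ξ i : ℂ)) *
      mellin (fun t => (h t : ℂ)) ((α : ℂ) + I * ((∑ i, ξ i : ℝ) : ℂ)) := by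
  have hα0 : 0 < α := by
    rw [hα]; exact Finset.sum_pos (fun i _ => hc i) ⟨⟨0, by omega⟩, Finset.mem_univ _⟩
  obtain ⟨h1, h2⟩ := polar (Qf q) (Qf_cont hq).measurable (Qf_add hq) (fun i => (c i : ℂ) + I * ξ i)
    ((α : ℂ) + I * ((∑ i, ξ i : ℝ) : ℂ)) (by
      rw [hα]; push_cast; rw [Finset.sum_add_distrib, Finset.mul_sum])
    (fun τ => cexp (-(Real.exp τ : ℝ))) (fun τ => (h (Real.exp τ) : ℂ)) (fun τ => Complex.exp_ne_zero _)
    (expq_int hn hq c ξ hc) (H_int hh _)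
  simp only [exp_Qf hq] at h1 h2
  refine ⟨h1, ∫ τ : ℝ, cexp (-((Real.exp τ : ℝ) : ℂ)) * cexp (((α : ℂ) + I * ((∑ i, ξ i : ℝ) : ℂ)) * τ), ?_, ?_⟩
  rotate_left
  · rw [mellinT_eq, mellin_exp]
    push_cast at h2 ⊢
    rw [← h2]
    congr 1
    congr 1; ext u
    rw [Kr]; push_cast
    rw [← mul_assoc, ← Complex.exp_add]
    congr 2
    simp only [add_mul, Finset.sum_add_distrib, Finset.mul_sum, mul_assoc]
    ring
  · have := mellin_exp (fun t => cexp (-(t : ℂ))) ((α : ℂ) + I * ((∑ i, ξ i : ℝ) : ℂ))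
    rw [← this]
    have re : 0 < ((α : ℂ) + I * ((∑ i, ξ i : ℝ) : ℂ)).re := by
      rw [Complex.add_re, Complex.I_mul_re, Complex.ofReal_im, Complex.ofReal_re]; linarith
    have e : mellin (fun t => cexp (-(t : ℂ))) ((α : ℂ) + I * ((∑ i, ξ i : ℝ) : ℂ)) = Complex.Gamma ((α : ℂ) + I * ((∑ i, ξ i : ℝ) : ℂ)) := by
      rw [Complex.Gamma_eq_integral re, Complex.GammaIntegral_eq_mellin]
      congr 1; ext t; push_cast; rfl
    rw [e]
    exact Complex.Gamma_ne_zero_of_re_pos re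

end WT

open WT Filter in
/-- Theorem: `R^h_q` is injective on `L^∞_{I-c}(ℝ^n_+)` iff `(M e^{-q})` has no zeros
on the plane `Re z = c` and `Mh` has no zeros on the line `Re s = α`. -/
theorem rhq_injective_Linf_iff
    (n : ℕ) (hn : 2 ≤ n) (q : (Fin n → ℝ) → ℝ) (hq : IsCostFun n q)
    (c : Fin n → ℝ) (hc : ∀ i, 0 < c i) (α : ℝ) (hα : α = ∑ i, c i)
    (h : ℝ → ℝ) (hh : MemL1w1 α h) :
    (∀ f : (Fin n → ℝ) → ℝ, MemLinfw n (fun i => 1 - c i) f →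
        (∀ p ∈ posOrth n, Rhq n q h f p = 0) →
        ∀ᵐ x ∂(volume.restrict (posOrth n)), f x = 0) ↔
      ((∀ ξ : Fin n → ℝ,
          mellinT n (fun x => Real.exp (-q x)) (fun i => (c i : ℂ) + I * (ξ i : ℂ)) ≠ 0) ∧
        (∀ τ : ℝ, mellin (fun t => (h t : ℂ)) ((α : ℂ) + I * (τ : ℂ)) ≠ 0)) := by
  have MI := main_id hn hq c hc α hα h hh
  have KI : Integrable (Kr q h c) := by
    have := (MI 0).1.re
    refine this.congr (Eventually.of_forall fun u => ?_)
    simp only [Pi.zero_apply, Complex.ofReal_zero, mul_zero, add_zero]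
    rw [Kr]
    have : cexp (∑ i, (c i : ℂ) * u i) * (h (q (Ev u)) : ℂ) = ((Real.exp (∑ i, c i * u i) * h (q (Ev u)) : ℝ) : ℂ) := by
      push_cast; rfl
    rw [this]; exact Complex.ofReal_re _
  constructor
  · intro inj
    have nz : ∀ ξ : Fin n → ℝ, ∫ u, cexp (I * ∑ i, (ξ i : ℂ) * u i) * Kr q h c u ≠ 0 := by
      intro ξ hz
      set f : (Fin n → ℝ) → ℝ := fun x => (∏ i, x i ^ (c i - 1)) * Real.cos (∑ i, ξ i * Real.log (x i)) with hf
      have fEv : ∀ u, f (Ev u) = Real.exp (-∑ i, (1 - c i) * u i) * Real.cos (∑ i, ξ i * u i) := by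
        intro u
        simp only [hf]
        rw [rpow_Ev, ← Finset.sum_neg_distrib]
        simp only [Ev, Real.log_exp]
        congr 2
        apply Finset.sum_congr rfl; intro i _; ring
      have hm : MemLinfw n (fun i => 1 - c i) f := by
        constructor
        · apply Measurable.aestronglyMeasurable
          simp only [hf]
          fun_prop
        · refine ⟨1, ae_of_Ev (Eventually.of_forall fun u => ?_)⟩
          rw [rpow_Ev, fEv, mul_right_comm, ← Real.exp_add, neg_add_cancel, Real.exp_zero, one_mul]
          exact Real.abs_cos_le_one _
      have hR : ∀ p ∈ posOrth n, Rhq n q h f p = 0 := by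
        intro p hp
        rw [← Ev_log hp, Rhq_Ev q h c]
        set v : Fin n → ℝ := fun i => Real.log (p i)
        apply mul_eq_zero_of_right
        have e1 : ∀ u, Kr q h c (u + v) * (f (Ev u) * Real.exp (∑ i, (1 - c i) * u i)) =
            (cexp (I * ∑ i, (ξ i : ℂ) * u i) * Kr q h c (u + v)).re := by
          intro u
          rw [fEv, mul_right_comm (Real.exp _), ← Real.exp_add, neg_add_cancel, Real.exp_zero, one_mul,
            Complex.re_mul_ofReal, mul_comm]
          congr 1
          have : I * ∑ i, (ξ i : ℂ) * u i = ((∑ i, ξ i * u i : ℝ) : ℂ) * I := by push_cast; ring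
          rw [this, Complex.exp_ofReal_mul_I_re]
        have e2 : ∀ u : Fin n → ℝ, cexp (I * ∑ i, (ξ i : ℂ) * u i) * Kr q h c (u + v) =
            cexp (-(I * ∑ i, (ξ i : ℂ) * v i)) * (cexp (I * ∑ i, (ξ i : ℂ) * ((u + v) i : ℝ)) * Kr q h c (u + v)) := by
          intro u
          rw [← mul_assoc, ← Complex.exp_add]
          congr 2
          simp only [Pi.add_apply, Complex.ofReal_add, mul_add, Finset.sum_add_distrib]
          ring
        have e3 : ∫ u, cexp (I * ∑ i, (ξ i : ℂ) * u i) * Kr q h c (u + v) = 0 := by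
          simp_rw [e2]
          rw [integral_const_mul, integral_add_right_eq_self
            (fun u : Fin n → ℝ => cexp (I * ∑ i, (ξ i : ℂ) * (u i : ℝ)) * Kr q h c u) v, hz, mul_zero]
        have i3 : Integrable fun u => cexp (I * ∑ i, (ξ i : ℂ) * u i) * Kr q h c (u + v) := by
          apply ((KI.comp_add_right v).ofReal (𝕜 := ℂ)).bdd_mul (c := 1)
          · exact Continuous.aestronglyMeasurable (by fun_prop)
          · refine Eventually.of_forall fun u => ?_
            have : I * ∑ i, (ξ i : ℂ) * u i = ((∑ i, ξ i * u i : ℝ) : ℂ) * I := by push_cast; ring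
            rw [this, Complex.norm_exp_ofReal_mul_I]
        simp_rw [e1]
        have := integral_re i3
        simp only [RCLike.re_eq_complex_re] at this
        rw [this, e3, Complex.zero_re]
      have h0 := qmp_Ev.ae (inj f hm hR)
      have h1 : (fun u : Fin n → ℝ => Real.cos (∑ i, ξ i * u i)) =ᵐ[volume] fun _ => 0 := by
        filter_upwards [h0] with u hu
        rw [fEv] at hu
        exact (mul_eq_zero.1 hu).resolve_left (Real.exp_pos _).ne'
      have h2 := (Continuous.ae_eq_iff_eq volume (by fun_prop) (by fun_prop)).1 h1
      have := congrFun h2 0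
      simp at this
    constructor
    · intro ξ hz
      obtain ⟨-, γ, hγ, e⟩ := MI ξ
      rw [hz, zero_mul] at e
      exact (mul_ne_zero (nz ξ) hγ) e
    · intro τ hz
      obtain ⟨-, γ, hγ, e⟩ := MI (Pi.single ⟨0, by omega⟩ τ)
      rw [Finset.sum_pi_single', if_pos (Finset.mem_univ _), hz, mul_zero] at e
      exact (mul_ne_zero (nz _) hγ) e
  · rintro ⟨A, B⟩ f ⟨hf1, C, hf2⟩ hR
    have nz : ∀ ξ : Fin n → ℝ, ∫ u, cexp (I * ∑ i, (ξ i : ℂ) * u i) * Kr q h c u ≠ 0 := by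
      intro ξ hz
      obtain ⟨-, γ, hγ, e⟩ := MI ξ
      rw [hz, zero_mul] at e
      exact mul_ne_zero (A ξ) (B _) e.symm
    have key := wiener_pi (g := fun u => f (Ev u) * Real.exp (∑ i, (1 - c i) * u i)) (Kr := Kr q h c) (C := C)
      ((hf1.comp_quasiMeasurePreserving qmp_Ev).mul (Continuous.aestronglyMeasurable (by fun_prop)))
      (by
        filter_upwards [qmp_Ev.ae hf2] with u hu
        rwa [rpow_Ev] at hu) KI
      (fun v => by
        have := hR _ (Ev_mem v)
        rw [Rhq_Ev q h c] at this
        exact (mul_eq_zero.1 this).resolve_left (Real.exp_pos _).ne') nz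
    apply ae_of_Ev
    filter_upwards [key] with u hu
    exact (mul_eq_zero.1 hu).resolve_right (Real.exp_pos _).ne'
end
end

section
/- Let n ≥ 1, c ∈ ℝ^n, and k ∈ L^1_c(ℝ^n_+). Then the linear span of the multiplicative shifts { k_p : p ∈ ℝ^n_+ }, where k_p(x) = k(p_1x_1,…,p_nx_n), is dense in L^1_c(ℝ^n_+) if and only if (Mk)(c + iξ) ≠ 0 for every ξ ∈ ℝ^n. -/
open MeasureTheory Complex Set

noncomputable section

/-- Membership in `L¹_c(ℝ^n_+)`: measurable with `∫ |f| x^{c-I} < ∞`. -/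
def MemL1w (n : ℕ) (c : Fin n → ℝ) (f : (Fin n → ℝ) → ℝ) : Prop :=
  IntegrableOn (fun x => f x * ∏ i, x i ^ (c i - 1)) (posOrth n)

namespace WT

set_option linter.unusedSectionVars false

open scoped FourierTransform SchwartzMap Convolution ContDiff
open Filter Topology

variable {V : Type*} [NormedAddCommGroup V] [InnerProductSpace ℝ V] [FiniteDimensional ℝ V]
  [MeasurableSpace V] [BorelSpace V]

/-- The Lebesgue space. -/
abbrev L1 (V : Type*) [NormedAddCommGroup V] [InnerProductSpace ℝ V] [FiniteDimensional ℝ V]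
  [MeasurableSpace V] [BorelSpace V] := Lp ℂ 1 (volume : Measure V)

/-- translation -/
def tau (y : V) : L1 V →ₗᵢ[ℂ] L1 V :=
  Lp.compMeasurePreservingₗᵢ ℂ (fun x => x - y) (measurePreserving_sub_right volume y)

lemma tau_coe (y : V) (f : L1 V) : tau y f =ᵐ[volume] fun x => f (x - y) :=
  Lp.coeFn_compMeasurePreserving f (measurePreserving_sub_right volume y)

lemma L1_int (f : L1 V) : Integrable (f : V → ℂ) := L1.integrable_coeFn f

lemma tau_cont (f : L1 V) : Continuous (fun y => tau y f) := by
  let G : C(V, C(V, V)) := (ContinuousMap.mk (fun a : V × V ↦ a.2 - a.1) (by fun_prop)).curry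
  exact Continuous.compMeasurePreservingLp (f := fun _ => f) (g := fun y => G y)
    continuous_const G.continuous
    (fun y => measurePreserving_sub_right volume y) (by simp)

lemma tau_comm (y z : V) (f : L1 V) : tau y (tau z f) = tau z (tau y f) := by
  apply Lp.ext
  have h1 := (measurePreserving_sub_right volume y).quasiMeasurePreserving.ae_eq_comp (tau_coe z f)
  have h2 := (measurePreserving_sub_right volume z).quasiMeasurePreserving.ae_eq_comp (tau_coe y f)
  filter_upwards [tau_coe y (tau z f), tau_coe z (tau y f), h1, h2] with x a b c d
  simp only [Function.comp] at c d
  rw [a, b, c, d]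
  congr 1
  abel

lemma T_integrable (h f : L1 V) : Integrable (fun y => h y • tau y f) := by
  refine Integrable.mono' ((L1_int h).norm.mul_const ‖f‖) ?_ ?_
  · exact (L1_int h).aestronglyMeasurable.smul (tau_cont f).aestronglyMeasurable
  · filter_upwards with y
    rw [norm_smul, LinearIsometry.norm_map]

/-- convolution operator -/
def T (h f : L1 V) : L1 V := ∫ y, h y • tau y f

lemma norm_eq (f : L1 V) : ‖f‖ = ∫ x, ‖f x‖ := L1.norm_eq_integral_norm f

lemma T_norm (h f : L1 V) : ‖T h f‖ ≤ ‖h‖ * ‖f‖ := by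
  refine (norm_integral_le_integral_norm _).trans ?_
  simp_rw [norm_smul, LinearIsometry.norm_map]
  rw [integral_mul_const, ← norm_eq]

lemma T_add (h f g : L1 V) : T h (f + g) = T h f + T h g := by
  unfold T
  rw [← integral_add (T_integrable h f) (T_integrable h g)]
  simp

lemma T_smul (h : L1 V) (c : ℂ) (f : L1 V) : T h (c • f) = c • T h f := by
  unfold T
  rw [← integral_smul]
  congr 1
  ext1 y
  rw [map_smul, smul_comm]

/-- convolution operator as CLM -/
def TL (h : L1 V) : L1 V →L[ℂ] L1 V :=
  LinearMap.mkContinuous ⟨⟨T h, T_add h⟩, T_smul h⟩ ‖h‖ (fun f => T_norm h f)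

lemma TL_apply (h f : L1 V) : TL h f = T h f := rfl

lemma T_tau (h : L1 V) (z : V) (f : L1 V) : T h (tau z f) = tau z (T h f) := by
  unfold T
  rw [show tau z (∫ y, h y • tau y f) = (tau z).toContinuousLinearMap (∫ y, h y • tau y f) from rfl,
    ← ContinuousLinearMap.integral_comp_comm _ (T_integrable h f)]
  congr 1
  ext1 y
  simp [tau_comm]

lemma T_T (h g f : L1 V) : T h (T g f) = T g (T h f) := by
  rw [← TL_apply h, T, ← ContinuousLinearMap.integral_comp_comm _ (T_integrable g f)]
  rw [T]
  congr 1
  ext1 y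
  rw [map_smul, TL_apply, T_tau]

/-- set integral -/
def phi (A : Set V) : L1 V →L[ℂ] ℂ :=
  LinearMap.mkContinuous ⟨⟨fun f => ∫ x in A, f x, by
    intro f g
    rw [← integral_add (L1_int f).integrableOn (L1_int g).integrableOn]
    exact integral_congr_ae (ae_restrict_of_ae (Lp.coeFn_add f g))⟩, by
    intro c f
    simp only [RingHom.id_apply]
    rw [← integral_smul]
    exact integral_congr_ae (ae_restrict_of_ae (Lp.coeFn_smul c f))⟩ 1 (by
    intro f
    simp only [LinearMap.coe_mk, AddHom.coe_mk, one_mul]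
    refine (norm_integral_le_integral_norm _).trans ?_
    rw [norm_eq]
    exact setIntegral_le_integral (L1_int f).norm (ae_of_all _ fun x => norm_nonneg _))

lemma phi_apply (A : Set V) (f : L1 V) : phi A f = ∫ x in A, f x := rfl

lemma T_coe (h f : L1 V) : T h f =ᵐ[volume] fun x => ∫ y, h y * f (x - y) := by
  have hi : Integrable (fun p : V × V => h p.2 * f (p.1 - p.2)) (volume.prod volume) := by
    simpa using (L1_int h).convolution_integrand (.mul ℝ ℂ) (L1_int f)
  refine Integrable.ae_eq_of_forall_setIntegral_eq _ _ (L1_int _) hi.integral_prod_left ?_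
  intro A hA _
  rw [← phi_apply, T, ← ContinuousLinearMap.integral_comp_comm _ (T_integrable h f)]
  rw [integral_integral_swap]
  · congr 1
    ext1 y
    rw [map_smul, phi_apply, smul_eq_mul, integral_const_mul]
    congr 1
    exact integral_congr_ae (ae_restrict_of_ae (tau_coe y f))
  · exact hi.mono_measure (Measure.prod_mono Measure.restrict_le_self le_rfl)

lemma T_symm (h f : L1 V) : T h f = T f h := by
  apply Lp.ext
  filter_upwards [T_coe h f, T_coe f h] with x a b
  rw [a, b, ← integral_sub_left_eq_self _ volume x]
  simp [mul_comm]

/-- T h f lies in any closed subspace containing translates of f -/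
lemma T_mem (J : Submodule ℂ (L1 V)) (hJ : IsClosed (J : Set (L1 V))) (f : L1 V)
    (hf : ∀ y, tau y f ∈ J) (h : L1 V) : T h f ∈ J := by
  have := hJ
  rw [← Submodule.Quotient.mk_eq_zero, ← Submodule.mkQ_apply]
  change J.mkQL (T h f) = 0
  rw [T, ← ContinuousLinearMap.integral_comp_comm _ (T_integrable h f)]
  have h0 : ∀ y, J.mkQL (h y • tau y f) = 0 := by
    intro y
    change J.mkQ (h y • tau y f) = 0
    rw [Submodule.mkQ_apply, Submodule.Quotient.mk_eq_zero]
    exact J.smul_mem _ (hf y)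
  simp [h0]

/-- local step -/
lemma local_step (J : Submodule ℂ (L1 V)) (hJ : IsClosed (J : Set (L1 V))) (K : L1 V)
    (hK : ∀ y, tau y K ∈ J) (v : L1 V) (c : ℂ)
    (hv : ‖v - c⁻¹ • T K v‖ < 1) (f : L1 V) (hf : T f v = f) : f ∈ J := by
  set g := v - c⁻¹ • T K v with hg
  let A : L1 V → L1 V := fun f => f - c⁻¹ • T K f
  have hA : ∀ f, T f v = f → A f = T f g := by
    intro f hf
    rw [hg, ← TL_apply, map_sub, map_smul, TL_apply, TL_apply, T_T f K, hf]
  have hA2 : ∀ f, T f v = f → T (A f) v = A f := by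
    intro f hf
    rw [T_symm, ← TL_apply, map_sub, map_smul, TL_apply, TL_apply, T_T v K, T_symm v f, hf]
  have hA3 : ∀ f, f - A f ∈ J := by
    intro f
    simp only [A, sub_sub_cancel]
    rw [T_symm]
    exact J.smul_mem _ (T_mem J hJ K hK f)
  have key : ∀ m : ℕ, T (A^[m] f) v = A^[m] f ∧ f - A^[m] f ∈ J ∧ ‖A^[m] f‖ ≤ ‖f‖ * ‖g‖ ^ m := by
    intro m
    induction m with
    | zero => simp [hf]
    | succ m ih =>
      obtain ⟨i1, i2, i3⟩ := ih
      rw [Function.iterate_succ_apply']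
      refine ⟨hA2 _ i1, ?_, ?_⟩
      · have := J.add_mem i2 (hA3 (A^[m] f))
        simpa using this
      · rw [hA _ i1, pow_succ, ← mul_assoc]
        exact (T_norm _ _).trans (mul_le_mul_of_nonneg_right i3 (norm_nonneg _))
  have lim : Tendsto (fun m : ℕ => A^[m] f) atTop (𝓝 0) := by
    apply squeeze_zero_norm (fun m => (key m).2.2)
    simpa using (tendsto_pow_atTop_nhds_zero_of_lt_one (norm_nonneg g) hv).const_mul ‖f‖
  have lim2 : Tendsto (fun m : ℕ => f - A^[m] f) atTop (𝓝 f) := by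
    simpa using lim.const_sub f
  exact hJ.mem_of_tendsto lim2 (Eventually.of_forall fun m => (key m).2.1)


lemma tau_tau (y z : V) (f : L1 V) : tau y (tau z f) = tau (y + z) f := by
  apply Lp.ext
  have h1 := (measurePreserving_sub_right volume y).quasiMeasurePreserving.ae_eq_comp (tau_coe z f)
  filter_upwards [tau_coe y (tau z f), tau_coe (y + z) f, h1] with x a b c
  simp only [Function.comp] at c
  rw [a, b, c]
  congr 1
  abel

lemma tau_zero (f : L1 V) : tau 0 f = f := by
  apply Lp.ext
  filter_upwards [tau_coe 0 f] with x a
  rw [a, sub_zero]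

/-- the bump -/
def bump (V : Type*) [NormedAddCommGroup V] [InnerProductSpace ℝ V] : ContDiffBump (0 : V) :=
  ⟨1, 2, by norm_num, by norm_num⟩

/-- dilated bump -/
def chi (lam : ℝ) (ξ₀ : V) : V → ℂ := fun ξ => ((bump V (lam⁻¹ • (ξ - ξ₀)) : ℝ) : ℂ)

lemma chi_smooth (lam : ℝ) (ξ₀ : V) : ContDiff ℝ ∞ (chi lam ξ₀) := by
  unfold chi
  refine Complex.ofRealCLM.contDiff.comp ((bump V).contDiff.comp ?_)
  fun_prop

lemma chi_supp {lam : ℝ} (hl : 0 < lam) (ξ₀ : V) : HasCompactSupport (chi lam ξ₀) := by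
  apply HasCompactSupport.intro (isCompact_closedBall ξ₀ (lam * 2))
  intro ξ hξ
  unfold chi
  rw [(bump V).zero_of_le_dist]
  · simp
  · simp only [Metric.mem_closedBall, not_le, dist_eq_norm] at hξ
    change 2 ≤ _
    rw [dist_zero_right, norm_smul, norm_inv, Real.norm_of_nonneg hl.le, inv_mul_eq_div,
      le_div_iff₀ hl]
    linarith

lemma chi_one {lam : ℝ} (hl : 0 < lam) (ξ₀ ξ : V) (h : ξ ∈ Metric.ball ξ₀ lam) :
    chi lam ξ₀ ξ = 1 := by
  unfold chi
  rw [(bump V).one_of_mem_closedBall]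
  · simp
  · simp only [Metric.mem_ball, dist_eq_norm] at h
    rw [mem_closedBall_zero_iff]
    change _ ≤ (1 : ℝ)
    rw [norm_smul, norm_inv, Real.norm_of_nonneg hl.le, inv_mul_eq_div, div_le_iff₀ hl]
    linarith

/-- Schwartz version -/
def X {lam : ℝ} (hl : 0 < lam) (ξ₀ : V) : 𝓢(V, ℂ) :=
  (chi_supp hl ξ₀).toSchwartzMap (chi_smooth lam ξ₀)

lemma X_apply {lam : ℝ} (hl : 0 < lam) (ξ₀ ξ : V) : X hl ξ₀ ξ = chi lam ξ₀ ξ := rfl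

/-- inverse Fourier to L1 -/
def Phi : 𝓢(V, ℂ) →L[ℂ] L1 V :=
  SchwartzMap.toLpCLM ℂ ℂ 1 volume ∘L FourierTransform.fourierInvCLM ℂ 𝓢(V, ℂ)

lemma Phi_coe (ψ : 𝓢(V, ℂ)) : Phi ψ =ᵐ[volume] fun x => (𝓕⁻ ψ : 𝓢(V, ℂ)) x :=
  SchwartzMap.coeFn_toLp _ 1 volume

/-- base function -/
def W (V : Type*) [NormedAddCommGroup V] [InnerProductSpace ℝ V] [FiniteDimensional ℝ V]
  [MeasurableSpace V] [BorelSpace V] : 𝓢(V, ℂ) := 𝓕⁻ (X one_pos (0 : V))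

lemma v_apply {lam : ℝ} (hl : 0 < lam) (ξ₀ x : V) :
    (𝓕⁻ (X hl ξ₀) : 𝓢(V, ℂ)) x =
      (lam ^ Module.finrank ℝ V : ℝ) • (Real.fourierChar (inner ℝ ξ₀ x) • W V (lam • x)) := by
  unfold W
  rw [SchwartzMap.fourierInv_coe, SchwartzMap.fourierInv_coe, Real.fourierInv_eq, Real.fourierInv_eq]
  rw [← integral_add_right_eq_self _ ξ₀]
  have := Measure.integral_comp_inv_smul (volume : Measure V)
    (fun η : V => Real.fourierChar (inner ℝ (lam • η + ξ₀) x) • X one_pos (0 : V) η) lam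
  rw [abs_of_pos (by positivity)] at this
  rw [Circle.smul_def, ← integral_smul]
  simp_rw [← Circle.smul_def, smul_smul, ← AddChar.map_add_eq_mul]
  refine Eq.trans ?_ (this.trans ?_)
  · congr 1
    ext1 η
    rw [smul_smul, mul_inv_cancel₀ hl.ne', one_smul]
    simp [X_apply, chi]
  · congr 2
    ext1 η
    congr 2
    rw [inner_add_left, inner_smul_left, inner_smul_right]
    simp [add_comm]

lemma norm_diff {lam : ℝ} (hl : 0 < lam) (ξ₀ y : V) :
    ‖tau y (Phi (X hl ξ₀)) - ((Real.fourierChar (-inner ℝ y ξ₀) : Circle) : ℂ) • Phi (X hl ξ₀)‖ =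
    ‖tau (lam • y) (Phi (X one_pos (0 : V))) - Phi (X one_pos (0 : V))‖ := by
  rw [norm_eq, norm_eq]
  have e1 : ∀ᵐ x : V, ‖(tau y (Phi (X hl ξ₀)) -
      ((Real.fourierChar (-inner ℝ y ξ₀) : Circle) : ℂ) • Phi (X hl ξ₀)) x‖ =
      lam ^ Module.finrank ℝ V * ‖W V (lam • x - lam • y) - W V (lam • x)‖ := by
    have h1 := (measurePreserving_sub_right volume y).quasiMeasurePreserving.ae_eq_comp
      (Phi_coe (X hl ξ₀))
    filter_upwards [Lp.coeFn_sub (tau y (Phi (X hl ξ₀)))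
      (((Real.fourierChar (-inner ℝ y ξ₀) : Circle) : ℂ) • Phi (X hl ξ₀)),
      Lp.coeFn_smul ((Real.fourierChar (-inner ℝ y ξ₀) : Circle) : ℂ) (Phi (X hl ξ₀)),
      tau_coe y (Phi (X hl ξ₀)), h1, Phi_coe (X hl ξ₀)] with x a b c d e
    simp only [Function.comp] at d
    rw [a, Pi.sub_apply, b, Pi.smul_apply, c, d, e, v_apply, v_apply]
    have h2 : Real.fourierChar (inner ℝ ξ₀ (x - y)) =
      Real.fourierChar (-inner ℝ y ξ₀) * Real.fourierChar (inner ℝ ξ₀ x) := by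
      rw [← AddChar.map_add_eq_mul, inner_sub_right, real_inner_comm y ξ₀]
      congr 1
      ring
    rw [h2, smul_sub, ← Circle.smul_def, smul_comm (Real.fourierChar (-inner ℝ y ξ₀)),
      smul_smul (Real.fourierChar (-inner ℝ y ξ₀)), ← smul_sub, ← smul_sub, norm_smul,
      Circle.norm_smul, Real.norm_of_nonneg (by positivity)]
  have e2 : ∀ᵐ x : V, ‖(tau (lam • y) (Phi (X one_pos (0 : V))) - Phi (X one_pos (0 : V))) x‖ =
      ‖W V (x - lam • y) - W V x‖ := by
    have h1 := (measurePreserving_sub_right volume (lam • y)).quasiMeasurePreserving.ae_eq_comp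
      (Phi_coe (X one_pos (0 : V)))
    filter_upwards [Lp.coeFn_sub (tau (lam • y) (Phi (X one_pos (0 : V)))) (Phi (X one_pos (0 : V))),
      tau_coe (lam • y) (Phi (X one_pos (0 : V))), h1, Phi_coe (X one_pos (0 : V))] with x a c d e
    simp only [Function.comp] at d
    rw [a, Pi.sub_apply, c, d, e]
    rfl
  rw [integral_congr_ae e1, integral_congr_ae e2, integral_const_mul,
    Measure.integral_comp_smul (volume : Measure V) (fun x => ‖W V (x - lam • y) - W V x‖) lam,
    abs_of_pos (by positivity), smul_eq_mul, ← mul_assoc, mul_inv_cancel₀ (by positivity), one_mul]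

lemma TK_bound {lam : ℝ} (hl : 0 < lam) (ξ₀ : V) (K : L1 V) :
    ‖T K (Phi (X hl ξ₀)) - (𝓕 (K : V → ℂ) ξ₀) • Phi (X hl ξ₀)‖ ≤
      ∫ y, ‖K y‖ * ‖tau (lam • y) (Phi (X one_pos (0 : V))) - Phi (X one_pos (0 : V))‖ := by
  have h1 : Integrable fun y => Real.fourierChar (-inner ℝ y ξ₀) • K y := by
    rw [Real.fourierIntegral_convergent_iff]
    exact L1_int K
  rw [T, Real.fourier_eq, ← integral_smul_const, ← integral_sub (T_integrable _ _) (h1.smul_const _)]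
  refine (norm_integral_le_integral_norm _).trans (le_of_eq ?_)
  congr 1
  ext1 y
  rw [← norm_diff hl ξ₀ y, Circle.smul_def, smul_eq_mul, mul_comm _ (K y), mul_smul, ← smul_sub,
    norm_smul]

lemma exists_lam (K : L1 V) (ξ₀ : V) (hc : 𝓕 (K : V → ℂ) ξ₀ ≠ 0) :
    ∃ (lam : ℝ) (hl : 0 < lam),
      ‖Phi (X hl ξ₀) - (𝓕 (K : V → ℂ) ξ₀)⁻¹ • T K (Phi (X hl ξ₀))‖ < 1 := by
  set w := Phi (X one_pos (0 : V)) with hw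
  have lim : Tendsto (fun lam : ℝ => ∫ y, ‖K y‖ * ‖tau (lam • y) w - w‖) (𝓝[>] 0) (𝓝 0) := by
    have : (0 : ℝ) = ∫ y : V, (0 : ℝ) := by simp
    rw [this]
    apply tendsto_integral_filter_of_dominated_convergence (fun y => ‖K y‖ * (‖w‖ + ‖w‖))
    · filter_upwards with lam
      refine (L1_int K).norm.aestronglyMeasurable.mul (Continuous.aestronglyMeasurable ?_)
      have := (tau_cont w).comp (continuous_const_smul lam)
      simp only [Function.comp_def] at this
      fun_prop
    · filter_upwards with lam
      filter_upwards with y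
      rw [norm_mul, norm_norm, norm_norm]
      gcongr
      refine (norm_sub_le _ _).trans ?_
      rw [LinearIsometry.norm_map]
    · exact (L1_int K).norm.mul_const _
    · filter_upwards with y
      have h1 : Tendsto (fun lam : ℝ => lam • y) (𝓝[>] 0) (𝓝 0) := by
        have : Continuous (fun lam : ℝ => lam • y) := by fun_prop
        simpa using (this.tendsto 0).mono_left nhdsWithin_le_nhds
      have h2 := ((tau_cont w).tendsto 0).comp h1
      rw [tau_zero] at h2
      simpa using ((h2.sub_const w).norm).const_mul ‖K y‖
  have hpos : 0 < ‖𝓕 (K : V → ℂ) ξ₀‖ := norm_pos_iff.2 hc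
  obtain ⟨lam, h1, h2⟩ := ((lim.eventually (gt_mem_nhds hpos)).and self_mem_nhdsWithin).exists
  refine ⟨lam, h2, ?_⟩
  have h3 := (TK_bound h2 ξ₀ K).trans_lt h1
  have h4 : Phi (X h2 ξ₀) - (𝓕 (K : V → ℂ) ξ₀)⁻¹ • T K (Phi (X h2 ξ₀)) =
    - ((𝓕 (K : V → ℂ) ξ₀)⁻¹ • (T K (Phi (X h2 ξ₀)) - (𝓕 (K : V → ℂ) ξ₀) • Phi (X h2 ξ₀))) := by
    rw [smul_sub, smul_smul, inv_mul_cancel₀ hc, one_smul, neg_sub]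
  rw [h4, norm_neg, norm_smul, norm_inv, inv_mul_eq_div, div_lt_one hpos]
  exact h3

lemma T_Phi (ψ θ : 𝓢(V, ℂ)) (h : ∀ ξ, ψ ξ * θ ξ = ψ ξ) : T (Phi ψ) (Phi θ) = Phi ψ := by
  have h1 : SchwartzMap.convolution (.mul ℂ ℂ) (𝓕⁻ ψ : 𝓢(V, ℂ)) (𝓕⁻ θ : 𝓢(V, ℂ)) =
      (𝓕⁻ ψ : 𝓢(V, ℂ)) := by
    have : 𝓕 (SchwartzMap.convolution (.mul ℂ ℂ) (𝓕⁻ ψ : 𝓢(V, ℂ)) (𝓕⁻ θ : 𝓢(V, ℂ))) = ψ := by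
      rw [SchwartzMap.fourier_convolution]
      ext ξ
      simpa using h ξ
    conv_rhs => rw [← this]
    simp
  apply Lp.ext
  filter_upwards [T_coe (Phi ψ) (Phi θ), Phi_coe ψ] with x a b
  rw [a, b, ← h1, SchwartzMap.convolution_apply]
  rw [convolution]
  apply integral_congr_ae
  have h2 := (quasiMeasurePreserving_sub_left volume x).ae_eq_comp
      (Phi_coe θ)
  filter_upwards [h2, Phi_coe ψ] with y c d
  simp only [Function.comp] at c
  rw [c, d]
  simp


lemma approx_id (h : L1 V) :
    Tendsto (fun m : ℕ => T (Phi (X (Nat.cast_add_one_pos (α := ℝ) m) (0 : V))) h) atTop (𝓝 h) := by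
  have e1 : ∀ m : ℕ, T (Phi (X (Nat.cast_add_one_pos (α := ℝ) m) (0 : V))) h =
      ∫ y, W V y • tau (((m : ℝ) + 1)⁻¹ • y) h := by
    intro m
    have hm := Nat.cast_add_one_pos (α := ℝ) m
    have := Measure.integral_comp_smul (volume : Measure V)
      (fun y : V => W V y • tau (((m : ℝ) + 1)⁻¹ • y) h) ((m : ℝ) + 1)
    rw [abs_of_pos (by positivity), eq_inv_smul_iff₀ (by positivity), ← integral_smul] at this
    rw [← this, T]
    apply integral_congr_ae
    filter_upwards [Phi_coe (X hm (0 : V))] with y hy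
    rw [hy, v_apply, smul_smul _ _ y, inv_mul_cancel₀ hm.ne', one_smul]
    simp only [inner_zero_left, AddChar.map_zero_eq_one, one_smul]
    rw [smul_assoc]
  have e2 : ∫ y, W V y = 1 := by
    have h1 : 𝓕 (W V) 0 = (1 : ℂ) := by
      unfold W
      rw [FourierTransform.fourier_fourierInv_eq, X_apply, chi_one one_pos]
      simp
    rw [SchwartzMap.fourier_coe, Real.fourier_eq] at h1
    simpa using h1
  have e3 : h = ∫ y, W V y • h := by
    rw [integral_smul_const, e2, one_smul]
  simp_rw [e1]
  conv_rhs => rw [e3]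
  apply tendsto_integral_filter_of_dominated_convergence (fun y => ‖W V y‖ * ‖h‖)
  · filter_upwards with m
    refine (W V).integrable.aestronglyMeasurable.smul (Continuous.aestronglyMeasurable ?_)
    exact (tau_cont h).comp (continuous_const_smul _)
  · filter_upwards with m
    filter_upwards with y
    rw [norm_smul, LinearIsometry.norm_map]
  · exact (W V).integrable.norm.mul_const _
  · filter_upwards with y
    have h1 : Tendsto (fun m : ℕ => ((m : ℝ) + 1)⁻¹ • y) atTop (𝓝 0) := by
      have := (tendsto_one_div_add_atTop_nhds_zero_nat (𝕜 := ℝ)).smul_const y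
      simpa using this
    have h2 := ((tau_cont h).tendsto 0).comp h1
    rw [tau_zero] at h2
    exact h2.const_smul _

open scoped Manifold in
lemma Phi_mem (K : L1 V) (hK : ∀ ξ, 𝓕 (K : V → ℂ) ξ ≠ 0)
    (J : Submodule ℂ (L1 V)) (hJ : IsClosed (J : Set (L1 V))) (hKJ : ∀ y, tau y K ∈ J)
    (ψ : 𝓢(V, ℂ)) (hψ : HasCompactSupport ψ) : Phi ψ ∈ J := by
  choose lam hl hlam using fun ξ => exists_lam K ξ (hK ξ)
  obtain ⟨t, ht⟩ := hψ.isCompact.elim_finite_subcover (fun ξ => Metric.ball ξ (lam ξ))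
    (fun ξ => Metric.isOpen_ball) (fun ξ _ => mem_iUnion.2 ⟨ξ, Metric.mem_ball_self (hl ξ)⟩)
  obtain ⟨ρ, hρ⟩ := SmoothPartitionOfUnity.exists_isSubordinate 𝓘(ℝ, V) (isClosed_tsupport ψ)
    (fun i : t => Metric.ball (i : V) (lam i)) (fun i => Metric.isOpen_ball) (by
      intro x hx
      obtain ⟨i, hi, hx⟩ := mem_iUnion₂.1 (ht hx)
      exact mem_iUnion.2 ⟨⟨i, hi⟩, hx⟩)
  have hs : ∀ i : t, ContDiff ℝ ∞ (fun x => ((ρ i x : ℝ) : ℂ) * ψ x) := by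
    intro i
    exact (Complex.ofRealCLM.contDiff.comp (ρ i).contMDiff.contDiff).mul ψ.smooth'
  have hc : ∀ i : t, HasCompactSupport (fun x => ((ρ i x : ℝ) : ℂ) * ψ x) :=
    fun i => hψ.mul_left
  have hsum : ψ = ∑ i : t, (hc i).toSchwartzMap (hs i) := by
    ext x
    rw [sum_apply]
    change ψ x = ∑ i : t, ((ρ i x : ℝ) : ℂ) * ψ x
    rw [← Finset.sum_mul]
    by_cases hx : x ∈ tsupport ψ
    · have := ρ.sum_eq_one hx
      rw [finsum_eq_sum_of_fintype] at this
      rw [← Complex.ofReal_sum, this]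
      simp
    · rw [image_eq_zero_of_notMem_tsupport hx, mul_zero]
  rw [hsum, map_sum]
  refine J.sum_mem fun i _ => ?_
  refine local_step J hJ K hKJ (Phi (X (hl i) (i : V))) _ (hlam i) _ (T_Phi _ _ ?_)
  intro ξ
  change ((ρ i ξ : ℝ) : ℂ) * ψ ξ * X (hl i) (i : V) ξ = ((ρ i ξ : ℝ) : ℂ) * ψ ξ
  by_cases h : ξ ∈ tsupport (ρ i)
  · rw [X_apply, chi_one (hl i) _ _ (hρ i h), mul_one]
  · rw [image_eq_zero_of_notMem_tsupport h]
    simp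

theorem wiener_s8 (K : L1 V) (hK : ∀ ξ, 𝓕 (K : V → ℂ) ξ ≠ 0)
    (J : Submodule ℂ (L1 V)) (hJ : IsClosed (J : Set (L1 V))) (hKJ : ∀ y, tau y K ∈ J)
    (h : L1 V) : h ∈ J := by
  refine hJ.mem_of_tendsto (approx_id h) (Eventually.of_forall fun m => ?_)
  rw [T_symm]
  refine T_mem J hJ _ ?_ h
  intro z
  have := Phi_mem K hK (J.comap (tau z).toLinearMap) (hJ.preimage (tau z).continuous) (by
    intro y
    rw [Submodule.mem_comap]
    change tau z (tau y K) ∈ J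
    rw [tau_tau]
    exact hKJ _) (X (Nat.cast_add_one_pos (α := ℝ) m) (0 : V)) (chi_supp (Nat.cast_add_one_pos (α := ℝ) m) _)
  exact this


/-- coordinatewise exponential -/
def expm (n : ℕ) (t : Fin n → ℝ) : Fin n → ℝ := fun i => Real.exp (t i)

/-- derivative -/
def expD (n : ℕ) (t : Fin n → ℝ) : (Fin n → ℝ) →L[ℝ] (Fin n → ℝ) :=
  ContinuousLinearMap.pi fun i => Real.exp (t i) • ContinuousLinearMap.proj i

lemma expD_det (n : ℕ) (t : Fin n → ℝ) : (expD n t).det = ∏ i, Real.exp (t i) := by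
  have : ((expD n t : (Fin n → ℝ) →L[ℝ] (Fin n → ℝ)) : (Fin n → ℝ) →ₗ[ℝ] (Fin n → ℝ)) =
      Matrix.toLin' (Matrix.diagonal fun i => Real.exp (t i)) := by
    ext v i
    simp [expD, Matrix.mulVec_diagonal]
  rw [ContinuousLinearMap.det, this, LinearMap.det_toLin', Matrix.det_diagonal]

lemma expm_deriv (n : ℕ) (t : Fin n → ℝ) : HasFDerivAt (expm n) (expD n t) t := by
  rw [hasFDerivAt_pi']
  intro i
  have h1 : HasFDerivAt (fun t : Fin n → ℝ => t i) (ContinuousLinearMap.proj (R := ℝ) (φ := fun _ => ℝ) i) t :=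
    hasFDerivAt_apply i t
  exact h1.exp

lemma expm_inj (n : ℕ) : Function.Injective (expm n) := by
  intro s t h
  ext i
  exact Real.exp_injective (congrFun h i)

lemma expm_image (n : ℕ) : expm n '' univ = posOrth n := by
  ext x
  constructor
  · rintro ⟨t, -, rfl⟩ i
    exact Real.exp_pos _
  · intro hx
    exact ⟨fun i => Real.log (x i), trivial, funext fun i => Real.exp_log (hx i)⟩

/-- coordinates of Euclidean space -/
abbrev EV (n : ℕ) := EuclideanSpace ℝ (Fin n)

/-- exp on Euclidean space -/
def ex (n : ℕ) (t : EV n) : Fin n → ℝ := fun i => Real.exp (t i)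

lemma cov_integral (n : ℕ) {E : Type*} [NormedAddCommGroup E] [NormedSpace ℝ E]
    (g : (Fin n → ℝ) → E) :
    ∫ x in posOrth n, g x = ∫ t : EV n, (∏ i, Real.exp (t i)) • g (ex n t) := by
  rw [← expm_image, integral_image_eq_integral_abs_det_fderiv_smul volume MeasurableSet.univ
    (fun t _ => (expm_deriv n t).hasFDerivWithinAt) (expm_inj n).injOn, setIntegral_univ]
  rw [← (EuclideanSpace.volume_preserving_symm_measurableEquiv_toLp (Fin n)).integral_comp']
  congr 1
  ext1 t
  rw [expD_det, abs_of_pos (Finset.prod_pos fun i _ => Real.exp_pos _)]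
  rfl

lemma cov_integrable (n : ℕ) {E : Type*} [NormedAddCommGroup E] [NormedSpace ℝ E]
    (g : (Fin n → ℝ) → E) :
    IntegrableOn g (posOrth n) ↔ Integrable fun t : EV n => (∏ i, Real.exp (t i)) • g (ex n t) := by
  rw [← expm_image, integrableOn_image_iff_integrableOn_abs_det_fderiv_smul volume MeasurableSet.univ
    (fun t _ => (expm_deriv n t).hasFDerivWithinAt) (expm_inj n).injOn, integrableOn_univ]
  rw [← (EuclideanSpace.volume_preserving_symm_measurableEquiv_toLp (Fin n)).integrable_comp_emb
    (MeasurableEquiv.measurableEmbedding _)]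
  apply iff_of_eq
  congr 1
  ext1 t
  simp only [Function.comp]
  rw [expD_det, abs_of_pos (Finset.prod_pos fun i _ => Real.exp_pos _)]
  rfl

/-- the lift -/
def lift {n : ℕ} (c : Fin n → ℝ) (f : (Fin n → ℝ) → ℝ) (t : EV n) : ℝ :=
  f (ex n t) * Real.exp (∑ i, c i * t i)

lemma weight {n : ℕ} (c : Fin n → ℝ) (t : EV n) :
    (∏ i, Real.exp (t i)) * ∏ i, (ex n t i) ^ (c i - 1) = Real.exp (∑ i, c i * t i) := by
  rw [← Finset.prod_mul_distrib, Real.exp_sum]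
  refine Finset.prod_congr rfl fun i _ => ?_
  rw [ex, ← Real.exp_mul, ← Real.exp_add]
  congr 1
  ring

lemma mem_iff {n : ℕ} (c : Fin n → ℝ) (f : (Fin n → ℝ) → ℝ) :
    MemL1w n c f ↔ Integrable (lift c f) := by
  rw [MemL1w, cov_integrable]
  apply iff_of_eq
  congr 1
  ext1 t
  rw [lift, ← weight, smul_eq_mul]
  ring

lemma norm_lift {n : ℕ} (c : Fin n → ℝ) (f : (Fin n → ℝ) → ℝ) :
    ∫ x in posOrth n, |f x| * ∏ i, x i ^ (c i - 1) = ∫ t, |lift c f t| := by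
  rw [cov_integral]
  congr 1
  ext1 t
  rw [lift, abs_mul, abs_of_pos (Real.exp_pos _), ← weight, smul_eq_mul]
  ring

/-- frequency -/
def freq {n : ℕ} (ξ : Fin n → ℝ) : EV n := WithLp.toLp 2 fun i => -(ξ i) / (2 * Real.pi)

lemma mellin_lift {n : ℕ} (c : Fin n → ℝ) (k : (Fin n → ℝ) → ℝ) (ξ : Fin n → ℝ) :
    mellinT n k (fun i => (c i : ℂ) + I * (ξ i : ℂ)) =
      𝓕 (fun t : EV n => (lift c k t : ℂ)) (freq ξ) := by
  rw [mellinT, cov_integral, Real.fourier_eq]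
  congr 1
  ext1 t
  have h1 : ∏ i, ((ex n t i : ℝ) : ℂ) ^ ((c i : ℂ) + I * (ξ i : ℂ) - 1) =
      Complex.exp (∑ i, (t i : ℂ) * ((c i : ℂ) + I * (ξ i : ℂ) - 1)) := by
    rw [Complex.exp_sum]
    refine Finset.prod_congr rfl fun i _ => ?_
    rw [ex, Complex.cpow_def_of_ne_zero (by exact_mod_cast (Real.exp_pos _).ne'),
      ← Complex.ofReal_log (Real.exp_pos _).le, Real.log_exp]
  rw [h1, lift, Circle.smul_def, Real.fourierChar_apply, PiLp.inner_apply, ← Real.exp_sum]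
  simp only [freq, smul_eq_mul, Complex.real_smul]
  push_cast
  rw [show ∀ a b d e f : ℂ, a * (b * e) = d * (e * f) ↔ (a * b) * e = (d * f) * e by
    intros; constructor <;> intro h <;> linear_combination h]
  congr 1
  rw [← Complex.exp_add, ← Complex.exp_add]
  congr 1
  have hpi : (Real.pi : ℂ) ≠ 0 := by exact_mod_cast Real.pi_ne_zero
  rw [← Finset.sum_neg_distrib, Finset.mul_sum, Finset.sum_mul, ← Finset.sum_add_distrib, ← Finset.sum_add_distrib]
  refine Finset.sum_congr rfl fun i _ => ?_
  simp
  field_simp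
  ring

lemma lift_shift {n : ℕ} (c : Fin n → ℝ) (k : (Fin n → ℝ) → ℝ) (y t : EV n) :
    lift c (fun x => k (fun i => Real.exp (-(y i)) * x i)) t =
      Real.exp (∑ i, c i * y i) * lift c k (t - y) := by
  unfold lift ex
  have h1 : (fun i => Real.exp (-(y i)) * Real.exp (t i)) = fun i => Real.exp ((t - y) i) := by
    ext i
    rw [← Real.exp_add]
    congr 1
    simp
    ring
  beta_reduce
  rw [h1, mul_left_comm, ← Real.exp_add, ← Finset.sum_add_distrib]
  congr 3
  ext i
  simp
  ring

lemma lift_sub_sum {n : ℕ} (c : Fin n → ℝ) (f k : (Fin n → ℝ) → ℝ) {N : ℕ} (a : Fin N → ℝ)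
    (p : Fin N → (Fin n → ℝ)) (t : EV n) :
    lift c (fun x => f x - ∑ j, a j * k (fun i => p j i * x i)) t =
      lift c f t - ∑ j, a j * lift c (fun x => k (fun i => p j i * x i)) t := by
  unfold lift
  rw [sub_mul, Finset.sum_mul]
  simp_rw [mul_assoc]


lemma fourier_shift {n : ℕ} (K : EV n → ℂ) (y η : EV n) (h : 𝓕 K η = 0) :
    ∫ t, Real.fourierChar (-inner ℝ t η) • K (t - y) = 0 := by
  rw [← integral_add_right_eq_self _ y]
  rw [Real.fourier_eq] at h
  have : ∀ t : EV n, Real.fourierChar (-inner ℝ (t + y) η) • K (t + y - y) =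
      ((Real.fourierChar (-inner ℝ y η) : Circle) : ℂ) • (Real.fourierChar (-inner ℝ t η) • K t) := by
    intro t
    rw [← Circle.smul_def, smul_smul, ← AddChar.map_add_eq_mul, inner_add_left, add_sub_cancel_right]
    congr 2
    ring
  simp_rw [this]
  rw [integral_smul, h, smul_zero]

/-- density in the statement -/
def Dens (n : ℕ) (c : Fin n → ℝ) (k : (Fin n → ℝ) → ℝ) : Prop :=
  ∀ f : (Fin n → ℝ) → ℝ, MemL1w n c f → ∀ ε : ℝ, 0 < ε →
        ∃ (N : ℕ) (a : Fin N → ℝ) (p : Fin N → (Fin n → ℝ)),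
          (∀ j, p j ∈ posOrth n) ∧
          ∫ x in posOrth n,
              |f x - ∑ j, a j * k (fun i => p j i * x i)| * ∏ i, x i ^ (c i - 1) < ε

lemma p_eq {n : ℕ} (p : Fin n → ℝ) (hp : p ∈ posOrth n) :
    ∃ y : EV n, p = fun i => Real.exp (-(y i)) :=
  ⟨WithLp.toLp 2 fun i => -Real.log (p i), by ext i; simp [Real.exp_log (hp i)]⟩

lemma real_zero {n : ℕ} (c : Fin n → ℝ) (k : (Fin n → ℝ) → ℝ) (hk : MemL1w n c k)
    (hd : Dens n c k) (η : EV n) (h0 : 𝓕 (fun t : EV n => (lift c k t : ℂ)) η = 0)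
    (G : EV n → ℝ) (hG : Integrable G) :
    ∫ t, Real.fourierChar (-inner ℝ t η) • (G t : ℂ) = 0 := by
  rw [mem_iff] at hk
  let f : (Fin n → ℝ) → ℝ := fun x =>
    G (WithLp.toLp 2 fun i => Real.log (x i)) * Real.exp (-∑ i, c i * Real.log (x i))
  have hf : lift c f = G := by
    ext t
    simp only [lift, f, ex, Real.log_exp]
    rw [mul_assoc, ← Real.exp_add]
    simp
  have hfm : MemL1w n c f := by rwa [mem_iff, hf]
  by_contra hne
  obtain ⟨N, a, p, hp, hlt⟩ := hd f hfm _ (norm_pos_iff.2 hne)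
  rw [norm_lift c (fun x => f x - ∑ j, a j * k (fun i => p j i * x i))] at hlt
  choose y hy using fun j => p_eq (p j) (hp j)
  have hl : ∀ t, lift c (fun x => f x - ∑ j, a j * k (fun i => p j i * x i)) t =
      G t - ∑ j, a j * Real.exp (∑ i, c i * y j i) * lift c k (t - y j) := by
    intro t
    rw [lift_sub_sum, hf]
    congr 1
    refine Finset.sum_congr rfl fun j _ => ?_
    rw [hy j, lift_shift, mul_assoc]
  simp_rw [hl] at hlt
  have i1 : ∀ {F : EV n → ℂ}, Integrable F →
      Integrable fun t => Real.fourierChar (-inner ℝ t η) • F t := by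
    intro F hF
    rw [Real.fourierIntegral_convergent_iff]
    exact hF
  have i2 : ∀ j, Integrable fun t => Real.fourierChar (-inner ℝ t η) •
      ((lift c k (t - y j) : ℝ) : ℂ) := fun j => i1 ((hk.comp_sub_right (y j)).ofReal)
  have e : ∫ t, Real.fourierChar (-inner ℝ t η) • (G t : ℂ) =
      ∫ t, Real.fourierChar (-inner ℝ t η) •
        ((G t - ∑ j, a j * Real.exp (∑ i, c i * y j i) * lift c k (t - y j) : ℝ) : ℂ) := by
    have : ∀ t : EV n, Real.fourierChar (-inner ℝ t η) •
        ((G t - ∑ j, a j * Real.exp (∑ i, c i * y j i) * lift c k (t - y j) : ℝ) : ℂ) =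
        Real.fourierChar (-inner ℝ t η) • (G t : ℂ) -
        ∑ j, ((a j * Real.exp (∑ i, c i * y j i) : ℝ) : ℂ) *
          (Real.fourierChar (-inner ℝ t η) • ((lift c k (t - y j) : ℝ) : ℂ)) := by
      intro t
      simp only [Circle.smul_def, smul_eq_mul]
      push_cast
      rw [mul_sub, Finset.mul_sum]
      congr 1
      refine Finset.sum_congr rfl fun j _ => ?_
      ring
    simp_rw [this]
    have i0 : Integrable fun t => Real.fourierChar (-inner ℝ t η) • (G t : ℂ) := i1 hG.ofReal
    rw [integral_sub i0 (integrable_finsetSum _ fun j _ => (i2 j).const_mul _),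
      integral_finsetSum _ fun j _ => (i2 j).const_mul _]
    simp_rw [integral_const_mul]
    have z : ∀ j, ∫ t, Real.fourierChar (-inner ℝ t η) • ((lift c k (t - y j) : ℝ) : ℂ) = 0 :=
      fun j => fourier_shift (fun t => (lift c k t : ℂ)) (y j) η h0
    simp [z]
  rw [e] at hlt
  have hfin := norm_integral_le_integral_norm (μ := volume)
    (fun t : EV n => Real.fourierChar (-inner ℝ t η) •
        ((G t - ∑ j, a j * Real.exp (∑ i, c i * y j i) * lift c k (t - y j) : ℝ) : ℂ))
  simp_rw [Circle.norm_smul, Complex.norm_real, Real.norm_eq_abs] at hfin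
  exact absurd hfin (not_le.2 hlt)

lemma forward {n : ℕ} (c : Fin n → ℝ) (k : (Fin n → ℝ) → ℝ) (hk : MemL1w n c k)
    (hd : Dens n c k) (η : EV n) : 𝓕 (fun t : EV n => (lift c k t : ℂ)) η ≠ 0 := by
  intro h0
  set H : 𝓢(EV n, ℂ) := 𝓕⁻ (X one_pos η) with hH
  have h1 : 𝓕 H η = (1 : ℂ) := by
    rw [hH, FourierTransform.fourier_fourierInv_eq, X_apply, chi_one one_pos]
    simp
  rw [SchwartzMap.fourier_coe, Real.fourier_eq] at h1
  have hr := real_zero c k hk hd η h0 (fun t => (H t).re) H.integrable.re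
  have him := real_zero c k hk hd η h0 (fun t => (H t).im) H.integrable.im
  have i1 : ∀ {F : EV n → ℂ}, Integrable F →
      Integrable fun t => Real.fourierChar (-inner ℝ t η) • F t := by
    intro F hF
    rw [Real.fourierIntegral_convergent_iff]
    exact hF
  have e : ∀ t : EV n, Real.fourierChar (-inner ℝ t η) • H t =
      Real.fourierChar (-inner ℝ t η) • ((H t).re : ℂ) +
      (Real.fourierChar (-inner ℝ t η) • ((H t).im : ℂ)) * I := by
    intro t
    simp only [Circle.smul_def, smul_eq_mul]
    conv_lhs => rw [← Complex.re_add_im (H t)]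
    ring
  simp_rw [e] at h1
  have j1 : Integrable fun t => Real.fourierChar (-inner ℝ t η) • ((H t).re : ℂ) :=
    i1 H.integrable.re.ofReal
  have j2 : Integrable fun t => Real.fourierChar (-inner ℝ t η) • ((H t).im : ℂ) :=
    i1 H.integrable.im.ofReal
  rw [integral_add j1 (j2.mul_const _),
    integral_mul_const, hr, him] at h1
  simp at h1

lemma backward {n : ℕ} (c : Fin n → ℝ) (k : (Fin n → ℝ) → ℝ) (hk : MemL1w n c k)
    (h : ∀ η : EV n, 𝓕 (fun t : EV n => (lift c k t : ℂ)) η ≠ 0) : Dens n c k := by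
  intro f hf ε hε
  rw [mem_iff] at hk hf
  let K : L1 (EV n) := hk.ofReal (𝕜 := ℂ) |>.toL1 _
  let F : L1 (EV n) := hf.ofReal (𝕜 := ℂ) |>.toL1 _
  have hKc : K =ᵐ[volume] fun t => (lift c k t : ℂ) := Integrable.coeFn_toL1 _
  have hFc : F =ᵐ[volume] fun t => (lift c f t : ℂ) := Integrable.coeFn_toL1 _
  have hK : ∀ ξ, 𝓕 (K : EV n → ℂ) ξ ≠ 0 := by
    intro ξ
    convert h ξ using 1
    rw [Real.fourier_eq, Real.fourier_eq]
    apply integral_congr_ae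
    filter_upwards [hKc] with t ht
    rw [ht]
  let S : Submodule ℂ (L1 (EV n)) := Submodule.span ℂ (range fun y => tau y K)
  have hmem : F ∈ S.topologicalClosure := wiener_s8 K hK _ S.isClosed_topologicalClosure
    (fun y => S.le_topologicalClosure (Submodule.subset_span ⟨y, rfl⟩)) F
  obtain ⟨s, hs, hsF⟩ := Metric.mem_closure_iff.1 hmem ε hε
  obtain ⟨N, b, g, hbg⟩ := Submodule.mem_span_set'.1 hs
  choose y hy using fun j => (g j).2
  simp only at hy
  refine ⟨N, fun j => (b j).re * Real.exp (-∑ i, c i * y j i), fun j i => Real.exp (-(y j i)),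
    fun j i => Real.exp_pos _, ?_⟩
  rw [norm_lift c (fun x => f x - ∑ j, (b j).re * Real.exp (-∑ i, c i * y j i) *
    k (fun i => Real.exp (-(y j i)) * x i))]
  refine lt_of_le_of_lt ?_ hsF
  rw [dist_eq_norm, norm_eq]
  have hsc : ∀ᵐ t : EV n, s t = ∑ j, b j * (lift c k (t - y j) : ℂ) := by
    have h1 : s = ∑ j, b j • tau (y j) K := by
      rw [← hbg]
      simp_rw [hy]
    have h2 := Lp.coeFn_finsetSum Finset.univ (fun j => b j • tau (y j) K)
    have h3 : ∀ᵐ t : EV n, ∀ j, (b j • tau (y j) K) t = b j * (lift c k (t - y j) : ℂ) := by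
      rw [ae_all_iff]
      intro j
      have h4 := (measurePreserving_sub_right volume (y j)).quasiMeasurePreserving.ae_eq_comp hKc
      filter_upwards [Lp.coeFn_smul (b j) (tau (y j) K), tau_coe (y j) K, h4] with t p q r
      simp only [Function.comp] at r
      rw [p, Pi.smul_apply, q, r, smul_eq_mul]
    rw [h1]
    filter_upwards [h2, h3] with t p q
    rw [p, Finset.sum_apply]
    exact Finset.sum_congr rfl fun j _ => q j
  refine integral_mono_of_nonneg (ae_of_all _ fun t => abs_nonneg _) (L1_int _).norm ?_
  filter_upwards [hsc, hFc, Lp.coeFn_sub F s] with t p q r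
  rw [r, Pi.sub_apply, p, q, lift_sub_sum c f k (fun j => (b j).re * Real.exp (-∑ i, c i * y j i))]
  refine le_trans (le_of_eq ?_) (Complex.abs_re_le_norm _)
  congr 1
  rw [Complex.sub_re, Complex.ofReal_re, Complex.re_sum]
  congr 1
  refine Finset.sum_congr rfl fun j _ => ?_
  rw [lift_shift, Complex.re_mul_ofReal, mul_assoc, ← mul_assoc (Real.exp _), ← Real.exp_add]
  simp

lemma freq_surj {n : ℕ} (η : EV n) : ∃ ξ, freq ξ = η :=
  ⟨fun i => -(2 * Real.pi * η i), by
    ext i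
    have := Real.pi_ne_zero
    simp [freq]⟩

end WT

/-- Lemma: for `k ∈ L¹_c(ℝ^n_+)`, the linear span of the multiplicative shifts
`k_p(x) = k(p₁x₁,…,pₙxₙ)`, `p ∈ ℝ^n_+`, is dense in `L¹_c(ℝ^n_+)` iff
`(Mk)(c + iξ) ≠ 0` for every `ξ ∈ ℝ^n`. -/
theorem span_mult_shifts_dense_L1_iff_mellin_no_zeros
    (n : ℕ) (hn : 1 ≤ n) (c : Fin n → ℝ) (k : (Fin n → ℝ) → ℝ)
    (hk : MemL1w n c k) :
    (∀ f : (Fin n → ℝ) → ℝ, MemL1w n c f → ∀ ε : ℝ, 0 < ε →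
        ∃ (N : ℕ) (a : Fin N → ℝ) (p : Fin N → (Fin n → ℝ)),
          (∀ j, p j ∈ posOrth n) ∧
          ∫ x in posOrth n,
              |f x - ∑ j, a j * k (fun i => p j i * x i)| * ∏ i, x i ^ (c i - 1) < ε) ↔
      ∀ ξ : Fin n → ℝ, mellinT n k (fun i => (c i : ℂ) + I * (ξ i : ℂ)) ≠ 0 := by
  change WT.Dens n c k ↔ _
  constructor
  · intro hd ξ
    rw [WT.mellin_lift]
    exact WT.forward c k hk hd _
  · intro h
    apply WT.backward c k hk
    intro η
    obtain ⟨ξ, rfl⟩ := WT.freq_surj η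
    rw [← WT.mellin_lift]
    exact h ξ
end
end
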